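/- arXiv:1202.4045 — 2 statements merged into one kernel-verified Lean document; each statement's English description precedes it below -/
import Mathlib

section
/- Let P be a simple polytope of dimension d > 1. If P has at least one pair of complementary vertices, then P has at least two pairs of complementary vertices that are disjoint, i.e., there exist four distinct vertices u, v, u', v' of P such that {u, v} and {u', v'} are both complementary pairs. -/
/-!
The proof splits into a parity argument on the vertex-facet incidences and the polytope geometry
feeding it.

*Combinatorics.* Write `φ x` for the set of `d` facets through a vertex `x`. Only two properties
of a simple polytope are used: `φ` is injective, and for each facet `F ∈ φ x` there is exactly one
vertex `y ≠ x` with `φ x \ {F} ⊆ φ y` (the other end of the edge of `x` leaving `F`). Fix a set `L`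
of `2d - 1` facets. In the spirit of the Lemke-Howson algorithm, count the pairs `(y, x)` with
`φ y ⊆ L ⊆ φ y ∪ φ x`. For fixed `y`, the vertex `x` must lie on the `d - 1` facets of `L \ φ y`,
so it has zero or two choices, and the count is even. The pairs with also `φ x ⊆ L` are matched by
the swap, without fixed points because `d < 2d - 1`. So the number of pairs with `φ y ⊆ L`,
`φ x ⊈ L` and `L ⊆ φ y ∪ φ x` is even (`parity`); all of these are complementary pairs.

If `u, v` are complementary and `F ∈ φ v`, then `L = φ u ∪ φ v \ {F}` admits the pair `(u, v)`,
hence another pair `(a, b)`. It avoids `v`, as `F ∉ φ a` and as `b = v` would force `φ a = φ u`;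
and `b ≠ u`. If `a = u`, then `b` lies on the `d - 1 ≥ 1` facets of `φ v \ {F}`, so `b` is not
complementary to `v` (`other`). Applying this with the roles of `u` and `v` exchanged as well gives
two disjoint pairs (`comb`).

*Geometry.* Let `P` be the convex hull of `S` and `v` a vertex. A functional that is maximal on `S`
at `v` and positive at some `z` can be tilted until it supports a facet, while staying positive at
`z` (`cone_facet`). It follows that, if `h` is maximal on `S` only at `v`, every nonzero direction
`z` of `P` with `h z ≥ 0` is cut off by a facet through `v` (`exists_facet_pos`). So no nonzero
direction is parallel to all facets through `v`, which gives injectivity of `φ`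
(`eq_of_facets_subset`). In the simple case, the `d - 1` facets through `v` other than `F₀` have a
common direction; if the sum `h` of their functionals were maximal on `S` only at `v`, this
direction would be cut off by a facet through `v`, which is impossible. So these facets share a
point of `S` other than `v`; the furthest one is the unique other vertex on them
(`exists_neighbour`).
-/

/-- `P` is a polytope: the convex hull of finitely many points. -/
def IsPolytope {n : ℕ} (P : Set (Fin n → ℝ)) : Prop :=
  ∃ S : Finset (Fin n → ℝ), P = convexHull ℝ (S : Set (Fin n → ℝ))

/-- A face of `P`: the empty set, `P` itself, or the intersection of `P`
with a supporting hyperplane. -/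
def IsFace {n : ℕ} (P F : Set (Fin n → ℝ)) : Prop :=
  F = ∅ ∨ F = P ∨ ∃ (f : (Fin n → ℝ) →ₗ[ℝ] ℝ) (c : ℝ),
    (∀ x ∈ P, f x ≤ c) ∧ F = {x ∈ P | f x = c}

/-- The dimension of a subset of `ℝⁿ`: the rank of its vector span
(i.e., its affine dimension). -/
noncomputable def sdim {n : ℕ} (F : Set (Fin n → ℝ)) : ℕ :=
  Module.finrank ℝ ↥(vectorSpan ℝ F)

/-- A vertex of `P`: a point whose singleton is a (0-dimensional) face of `P`. -/
def IsVertex {n : ℕ} (P : Set (Fin n → ℝ)) (v : Fin n → ℝ) : Prop :=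
  IsFace P {v}

/-- A facet of `P`: a nonempty face of dimension `dim P - 1`. -/
def IsFacet {n : ℕ} (P F : Set (Fin n → ℝ)) : Prop :=
  IsFace P F ∧ F.Nonempty ∧ sdim F + 1 = sdim P

/-- An edge of `P`: a face of dimension 1. -/
def IsEdge {n : ℕ} (P F : Set (Fin n → ℝ)) : Prop :=
  IsFace P F ∧ sdim F = 1

/-- Two vertices are adjacent if they are joined by an edge. -/
def Adjacent {n : ℕ} (P : Set (Fin n → ℝ)) (u v : Fin n → ℝ) : Prop :=
  u ≠ v ∧ ∃ F, IsEdge P F ∧ u ∈ F ∧ v ∈ F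

/-- A polytope is simple if every vertex belongs to precisely `dim P` facets. -/
def IsSimplePolytope {n : ℕ} (P : Set (Fin n → ℝ)) : Prop :=
  ∀ v, IsVertex P v → {F | IsFacet P F ∧ v ∈ F}.ncard = sdim P

/-- A polytope is simplicial if every facet contains precisely `dim P` vertices. -/
def IsSimplicialPolytope {n : ℕ} (P : Set (Fin n → ℝ)) : Prop :=
  ∀ F, IsFacet P F → {v | IsVertex P v ∧ v ∈ F}.ncard = sdim P

/-- Two vertices are complementary if no facet contains both. -/
def Complementary {n : ℕ} (P : Set (Fin n → ℝ)) (u v : Fin n → ℝ) : Prop :=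
  ∀ F, IsFacet P F → ¬ (u ∈ F ∧ v ∈ F)

/-- `J` is the join `F ∨ G`: the smallest face of `P` containing both `F` and `G`. -/
def IsJoin {n : ℕ} (P F G J : Set (Fin n → ℝ)) : Prop :=
  IsFace P J ∧ F ⊆ J ∧ G ⊆ J ∧ ∀ J', IsFace P J' → F ⊆ J' → G ⊆ J' → J ⊆ J'

/-! ### Parity of complementary pairs -/

open Finset in
/-- In a pair counted here, `φ p.2` consists of `L \ φ p.1` and one label outside `L`. So these are
the complementary pairs covering `L`, each of them listed once: the order of the pair is fixed by
which of the two label sets lies in `L`. -/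
theorem parity {V β : Type*} [Fintype V] [DecidableEq V] [DecidableEq β] (φ : V → Finset β) (d : ℕ) (hd : 1 < d)
    (hcard : ∀ x, #(φ x) = d)
    (hpiv : ∀ x, ∀ F ∈ φ x, ∃! y, y ≠ x ∧ (φ x).erase F ⊆ φ y)
    (L : Finset β) (hL : #L = 2 * d - 1) :
    Even #{p : V × V | φ p.1 ⊆ L ∧ ¬ φ p.2 ⊆ L ∧ L ⊆ φ p.1 ∪ φ p.2} := by
  -- fibred over `p.1`: each fibre has zero or two elements
  have hI : Even #{p : V × V | φ p.1 ⊆ L ∧ L ⊆ φ p.1 ∪ φ p.2} := by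
    rw [card_eq_sum_card_fiberwise (f := Prod.fst) (t := univ) (by simp)]
    refine Finset.even_sum _ fun y _ => ?_
    by_cases hy : φ y ⊆ L
    swap
    · convert Even.zero
      rw [card_eq_zero, filter_eq_empty_iff]
      rintro p hp rfl
      simp at hp; exact hy hp.1
    have e : #{p ∈ ({p : V × V | φ p.1 ⊆ L ∧ L ⊆ φ p.1 ∪ φ p.2} : Finset _) | p.1 = y}
        = #{x : V | L \ φ y ⊆ φ x} := by
      refine card_bij (fun p _ => p.2) ?_ ?_ ?_
      · rintro ⟨a, b⟩ h
        simp only [mem_filter, mem_univ, true_and] at h ⊢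
        obtain ⟨⟨h1, h2⟩, rfl⟩ := h
        exact sdiff_le_iff.2 h2
      · rintro ⟨a, b⟩ h ⟨a', b'⟩ h' hh
        simp at h h' hh ⊢
        exact ⟨h.2.trans h'.2.symm, hh⟩
      · intro x hx
        simp only [mem_filter, mem_univ, true_and] at hx
        exact ⟨(y, x), by simpa [hy] using (sdiff_le_iff.1 hx : L ⊆ φ y ∪ φ x), rfl⟩
    rw [e]
    rcases ({x : V | L \ φ y ⊆ φ x} : Finset V).eq_empty_or_nonempty with h0 | ⟨x, hx⟩
    · rw [h0]; simp
    simp only [mem_filter, mem_univ, true_and] at hx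
    have hR : #(L \ φ y) = d - 1 := by
      rw [card_sdiff_of_subset hy, hL, hcard]; omega
    obtain ⟨F, hF, hFR⟩ : ∃ F ∈ φ x, F ∉ L \ φ y := by
      by_contra! h
      have := card_le_card (show φ x ⊆ L \ φ y from h)
      rw [hcard, hR] at this; omega
    have hRe : L \ φ y = (φ x).erase F := by
      refine eq_of_subset_of_card_le (fun a ha => mem_erase.2 ⟨?_, hx ha⟩) ?_
      · rintro rfl; exact hFR ha
      · rw [card_erase_of_mem hF, hcard, hR]
    obtain ⟨x', ⟨hx'1, hx'2⟩, hx'3⟩ := hpiv x F hF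
    have : ({x : V | L \ φ y ⊆ φ x} : Finset V) = {x, x'} := by
      ext a
      simp only [mem_filter, mem_univ, true_and, mem_insert, mem_singleton]
      constructor
      · intro ha
        by_cases hax : a = x
        · exact Or.inl hax
        · exact Or.inr (hx'3 a ⟨hax, hRe ▸ ha⟩)
      · rintro (rfl | rfl)
        · exact hx
        · rw [hRe]; exact hx'2
    rw [this, card_pair hx'1.symm]
    exact even_two
  -- the swap is an involution without fixed points
  have hB : Even #{p : V × V | φ p.1 ⊆ L ∧ φ p.2 ⊆ L ∧ L ⊆ φ p.1 ∪ φ p.2} := by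
    rw [← ZMod.natCast_eq_zero_iff_even, card_eq_sum_ones, Nat.cast_sum]
    refine sum_involution (fun p _ => p.swap) ?_ ?_ ?_ ?_
    · intros; decide
    · rintro ⟨a, b⟩ h _ hab
      simp only [Prod.swap_prod_mk, Prod.mk.injEq] at hab
      obtain ⟨rfl, -⟩ := hab
      simp only [mem_filter, mem_univ, true_and, union_self] at h
      have := card_le_card h.2.2
      rw [hcard, hL] at this; omega
    · rintro ⟨a, b⟩ h
      simp only [mem_filter, mem_univ, true_and, Prod.fst_swap, Prod.snd_swap] at h ⊢
      exact ⟨h.2.1, h.1, by rw [union_comm]; exact h.2.2⟩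
    · simp
  have hs := card_filter_add_card_filter_not (s := ({p : V × V | φ p.1 ⊆ L ∧ L ⊆ φ p.1 ∪ φ p.2} : Finset _)) (fun p => φ p.2 ⊆ L)
  rw [filter_filter, filter_filter] at hs
  rw [← hs] at hI
  have := (Nat.even_add.1 hI).1 (by convert hB using 3; tauto)
  convert this using 3; tauto

open Finset in
/-- A second complementary pair `a, b` that avoids `v`. It may contain `u`, but only as `a`, and then
`b` shares a label with `v`. -/
theorem other {V β : Type*} [Fintype V] [DecidableEq V] [DecidableEq β] (φ : V → Finset β) (d : ℕ) (hd : 1 < d)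
    (hcard : ∀ x, #(φ x) = d)
    (hpiv : ∀ x, ∀ F ∈ φ x, ∃! y, y ≠ x ∧ (φ x).erase F ⊆ φ y)
    (hinj : Function.Injective φ) {u v : V} (huv : Disjoint (φ u) (φ v)) :
    ∃ a b, Disjoint (φ a) (φ b) ∧ a ≠ v ∧ b ≠ u ∧ b ≠ v ∧ (a = u → ¬ Disjoint (φ v) (φ b)) := by
  obtain ⟨F, hF⟩ : (φ v).Nonempty := card_pos.1 (by rw [hcard]; omega)
  set L := φ u ∪ (φ v).erase F with hLdef
  have hL : #L = 2 * d - 1 := by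
    rw [card_union_of_disjoint (huv.mono_right (erase_subset _ _)), card_erase_of_mem hF, hcard, hcard]
    omega
  have hFL : F ∉ L := by
    simp only [hLdef, mem_union, mem_erase, not_or]
    exact ⟨fun h => disjoint_left.1 huv h hF, by simp⟩
  have hev := parity φ d hd hcard hpiv L hL
  set A : Finset (V × V) := {p : V × V | φ p.1 ⊆ L ∧ ¬ φ p.2 ⊆ L ∧ L ⊆ φ p.1 ∪ φ p.2} with hA
  have huvA : (u, v) ∈ A := by
    simp only [hA, mem_filter, mem_univ, true_and]
    exact ⟨subset_union_left, fun h => hFL (h hF), union_subset_union_right (erase_subset _ _)⟩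
  have h1 : 1 < #A := by
    have : 0 < #A := card_pos.2 ⟨_, huvA⟩
    rcases hev with ⟨k, hk⟩
    omega
  obtain ⟨⟨a, b⟩, hab, hne⟩ := exists_mem_ne h1 (u, v)
  simp only [hA, mem_filter, mem_univ, true_and] at hab
  obtain ⟨ha, hb, hcov⟩ := hab
  obtain ⟨G, hGb, hGL⟩ := not_subset.1 hb
  have hbig : 2 * d ≤ #(φ a ∪ φ b) := by
    have : insert G L ⊆ φ a ∪ φ b := insert_subset (mem_union_right _ hGb) hcov
    have := card_le_card this
    rw [card_insert_of_notMem hGL, hL] at this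
    omega
  have hdis : Disjoint (φ a) (φ b) := by
    rw [disjoint_iff_inter_eq_empty, ← card_eq_zero]
    have := card_union_add_card_inter (φ a) (φ b)
    rw [hcard, hcard] at this
    omega
  refine ⟨a, b, hdis, ?_, ?_, ?_, ?_⟩
  · rintro rfl; exact hFL (ha hF)
  · rintro rfl; exact hb subset_union_left
  · rintro rfl
    refine hne ?_
    have : φ a = φ u := by
      refine eq_of_subset_of_card_le (fun x hx => ?_) (by rw [hcard, hcard])
      rcases mem_union.1 (ha hx) with h | h
      · exact h
      · exact absurd (mem_of_mem_erase h) (disjoint_left.1 hdis hx)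
    rw [hinj this]
  · rintro rfl h
    obtain ⟨G', hG'⟩ : ((φ v).erase F).Nonempty := card_pos.1 (by rw [card_erase_of_mem hF, hcard]; omega)
    have hG'v := mem_of_mem_erase hG'
    rcases mem_union.1 (hcov (mem_union_right _ hG')) with h' | h'
    · exact disjoint_left.1 huv h' hG'v
    · exact disjoint_left.1 h hG'v h'

open Finset in
/-- Combinatorial form of the theorem, for labels in place of facets. If both applications of `other`
return a pair meeting `{u, v}`, the pairs are `{u, b}` and `{v, b'}`, where `b' ≠ b` because `b` shares
a label with `v`. -/
theorem comb {V β : Type*} [Fintype V] [DecidableEq V] [DecidableEq β] (φ : V → Finset β) (d : ℕ) (hd : 1 < d)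
    (hcard : ∀ x, #(φ x) = d)
    (hpiv : ∀ x, ∀ F ∈ φ x, ∃! y, y ≠ x ∧ (φ x).erase F ⊆ φ y)
    (hinj : Function.Injective φ) {u v : V} (huv : Disjoint (φ u) (φ v)) :
    ∃ a b a' b', a ≠ a' ∧ a ≠ b' ∧ b ≠ a' ∧ b ≠ b' ∧
      Disjoint (φ a) (φ b) ∧ Disjoint (φ a') (φ b') := by
  obtain ⟨a, b, hab, h1, h2, h3, h4⟩ := other φ d hd hcard hpiv hinj huv
  obtain ⟨a', b', hab', h1', h2', h3', h4'⟩ := other φ d hd hcard hpiv hinj huv.symm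
  by_cases ha : a = u
  · by_cases ha' : a' = v
    · subst ha ha'
      refine ⟨a, b, a', b', h1, h3'.symm, h3, ?_, hab, hab'⟩
      rintro rfl
      exact h4' rfl hab
    · exact ⟨u, v, a', b', h1'.symm, h3'.symm, Ne.symm ha', h2'.symm, huv, hab'⟩
  · exact ⟨u, v, a, b, Ne.symm ha, h2.symm, h1.symm, h3.symm, huv, hab⟩

/-! ### Polyhedral cones -/

open Filter Topology in
/-- On a finite set, `a ≤ 0` becomes strictly negative after adding a small multiple of a `b` that is
negative wherever `a` vanishes. -/
theorem exists_perturb {E : Type*} (S : Finset E) (a b : E → ℝ) (ha : ∀ s ∈ S, a s ≤ 0)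
    (hb : ∀ s ∈ S, a s = 0 → b s < 0) : ∃ ε : ℝ, 0 < ε ∧ ∀ s ∈ S, a s + ε * b s < 0 := by
  have : ∀ᶠ t in 𝓝[>] (0 : ℝ), ∀ s ∈ S, a s + t * b s < 0 := by
    rw [Filter.eventually_all_finset]
    intro s hs
    rcases (ha s hs).lt_or_eq with h | h
    · have hc : Tendsto (fun t : ℝ => a s + t * b s) (𝓝[>] 0) (𝓝 (a s + 0 * b s)) :=
        (Continuous.tendsto (by fun_prop) 0).mono_left nhdsWithin_le_nhds
      exact hc.eventually_lt_const (by simpa using h)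
    · filter_upwards [self_mem_nhdsWithin] with t ht
      rw [h, zero_add]
      exact mul_neg_of_pos_of_neg ht (hb s hs h)
  obtain ⟨t, ht, ht'⟩ := (this.and self_mem_nhdsWithin).exists
  exact ⟨t, ht', ht⟩

open Module in
/-- A functional in the dual of the cone generated by `D` that is positive at `z` can be replaced by
one that vanishes on a facet of that cone. The induction enlarges the set of elements of `D` on which
the functional vanishes. -/
theorem cone_facet {E : Type*} [AddCommGroup E] [Module ℝ E] [FiniteDimensional ℝ E]
    (D : Finset E) {z : E} (hzW : z ∈ Submodule.span ℝ (D : Set E)) (f : E →ₗ[ℝ] ℝ)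
    (hf : ∀ s ∈ D, f s ≤ 0) (hz : 0 < f z) :
    ∃ f' : E →ₗ[ℝ] ℝ, (∀ s ∈ D, f' s ≤ 0) ∧ 0 < f' z ∧
      finrank ℝ (Submodule.span ℝ {s | s ∈ D ∧ f' s = 0}) + 1 =
        finrank ℝ (Submodule.span ℝ (D : Set E)) := by
  classical
  induction hk : (D.filter fun s => f s ≠ 0).card using Nat.strong_induction_on generalizing f with
  | _ k ih =>
  set W := Submodule.span ℝ (D : Set E) with hW
  set T := Submodule.span ℝ {s | s ∈ D ∧ f s = 0} with hT
  have hTW : T ≤ W := Submodule.span_mono fun s hs => hs.1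
  have hTf : T ≤ f.ker := Submodule.span_le.2 fun s hs => hs.2
  have hlt : finrank ℝ T < finrank ℝ W := by
    refine Submodule.finrank_lt_finrank_of_lt (lt_of_le_of_ne hTW fun h => ?_)
    have : z ∈ f.ker := hTf (h ▸ hzW)
    exact hz.ne' this
  by_cases heq : finrank ℝ T + 1 = finrank ℝ W
  · exact ⟨f, hf, hz, heq⟩
  -- a functional vanishing at `b` but not on all of `D` takes both signs on `D`, so it is positive
  -- somewhere whichever of its two signs is chosen to make it nonnegative at `z`
  set b := ∑ s ∈ D, s with hb
  set K := T ⊔ Submodule.span ℝ {b} with hK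
  have hKW : K ≤ W := sup_le hTW ((Submodule.span_singleton_le_iff_mem _ _).2
    (Submodule.sum_mem _ fun s hs => Submodule.subset_span hs))
  have hKlt : finrank ℝ K < finrank ℝ W := by
    have h1 : finrank ℝ K ≤ _ := Submodule.finrank_add_le_finrank_add_finrank T (Submodule.span ℝ {b})
    have h2 : finrank ℝ (Submodule.span ℝ {b}) ≤ 1 := by
      simpa using finrank_span_le_card (R := ℝ) ({b} : Set E)
    omega
  obtain ⟨w, hwW, hwK⟩ : ∃ w ∈ W, w ∉ K := by
    by_contra! h
    exact absurd (Submodule.finrank_mono (show W ≤ K from h)) (not_le.2 hKlt)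
  obtain ⟨g, hgw, hgK, hgz⟩ : ∃ g : E →ₗ[ℝ] ℝ, g w ≠ 0 ∧ K ≤ g.ker ∧ 0 ≤ g z := by
    obtain ⟨g, h1, h2⟩ := Submodule.exists_le_ker_of_notMem hwK
    rcases le_total 0 (g z) with h | h
    · exact ⟨g, h1, h2, h⟩
    · refine ⟨-g, by simpa using h1, fun x hx => ?_, by simpa using h⟩
      have : g x = 0 := h2 hx
      simp [this]
  have hgb : ∑ s ∈ D, g s = 0 := by
    rw [← map_sum]
    exact hgK (le_sup_right (a := T) (Submodule.mem_span_singleton_self b))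
  have hpos : (D.filter fun s => 0 < g s).Nonempty := by
    by_contra h
    rw [Finset.not_nonempty_iff_eq_empty, Finset.filter_eq_empty_iff] at h
    have h0 := (Finset.sum_eq_zero_iff_of_nonpos (fun s hs => not_lt.1 (h hs))).1 hgb
    exact hgw ((Submodule.span_le (p := g.ker)).2 (fun s hs => h0 s hs) hwW)
  obtain ⟨s₁, hs₁, hmin⟩ := Finset.exists_min_image _ (fun s => -f s / g s) hpos
  rw [Finset.mem_filter] at hs₁
  -- the largest `t` for which `f + t • g` is still nonpositive on `D`; it newly vanishes at `s₁`
  set t := -f s₁ / g s₁ with ht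
  have hTg : ∀ s ∈ D, f s = 0 → g s = 0 := fun s hs h0 =>
    hgK (le_sup_left (b := Submodule.span ℝ {b}) (Submodule.subset_span ⟨hs, h0⟩))
  have hfs₁ : f s₁ ≠ 0 := fun h => hs₁.2.ne' (hTg _ hs₁.1 h)
  have ht0 : 0 ≤ t := div_nonneg (neg_nonneg.2 (hf _ hs₁.1)) hs₁.2.le
  refine ih _ ?_ (f + t • g) ?_ ?_ rfl
  · rw [← hk]
    refine Finset.card_lt_card ⟨fun s hs => ?_, fun h => ?_⟩
    · simp only [Finset.mem_filter, LinearMap.add_apply, LinearMap.smul_apply, smul_eq_mul] at hs ⊢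
      refine ⟨hs.1, fun h0 => hs.2 ?_⟩
      rw [h0, hTg s hs.1 h0]; simp
    · have := h (Finset.mem_filter.2 ⟨hs₁.1, hfs₁⟩)
      simp only [Finset.mem_filter, LinearMap.add_apply, LinearMap.smul_apply, smul_eq_mul] at this
      refine this.2 ?_
      rw [ht, div_mul_cancel₀ _ hs₁.2.ne']; ring
  · intro s hs
    simp only [LinearMap.add_apply, LinearMap.smul_apply, smul_eq_mul]
    rcases le_or_gt (g s) 0 with h | h
    · have := hf s hs
      nlinarith [mul_nonneg ht0 (neg_nonneg.2 h)]
    · have := (le_div_iff₀ h).1 (hmin s (Finset.mem_filter.2 ⟨hs, h⟩))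
      linarith
  · simp only [LinearMap.add_apply, LinearMap.smul_apply, smul_eq_mul]
    have := mul_nonneg ht0 hgz
    linarith

/-! ### Vertices, facets and supporting functionals -/

theorem le_of_mem_hull {n : ℕ} {S : Set (Fin n → ℝ)} {f : (Fin n → ℝ) →ₗ[ℝ] ℝ} {c : ℝ}
    (h : ∀ s ∈ S, f s ≤ c) {x : Fin n → ℝ} (hx : x ∈ convexHull ℝ S) : f x ≤ c :=
  convexHull_min (t := {x | f x ≤ c}) h (convex_halfSpace_le f.isLinear c) hx

theorem vectorSpan_hull {n : ℕ} {S : Set (Fin n → ℝ)} {v : Fin n → ℝ} (hv : v ∈ S) :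
    vectorSpan ℝ (convexHull ℝ S) = Submodule.span ℝ ((fun s => s - v) '' S) := by
  rw [← direction_affineSpan, affineSpan_convexHull, direction_affineSpan,
    vectorSpan_eq_span_vsub_set_right ℝ hv]
  rfl

/-- A vertex is one of the generating points, and some functional has its strict maximum there. -/
theorem IsVertex.exists_functional {n : ℕ} {S : Finset (Fin n → ℝ)} {v : Fin n → ℝ}
    (hd : 0 < sdim (convexHull ℝ (S : Set (Fin n → ℝ))))
    (hv : IsVertex (convexHull ℝ (S : Set (Fin n → ℝ))) v) :
    v ∈ S ∧ ∃ g : (Fin n → ℝ) →ₗ[ℝ] ℝ, ∀ s ∈ S, s ≠ v → g s < g v := by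
  rcases hv with h | h | ⟨g, c, hg, hF⟩
  · exact absurd h (Set.singleton_ne_empty v)
  · rw [← h, sdim, vectorSpan_singleton, finrank_bot] at hd
    exact absurd hd (lt_irrefl 0)
  · have hv' : v ∈ {x ∈ convexHull ℝ (S : Set (Fin n → ℝ)) | g x = c} := hF ▸ rfl
    have hlt : ∀ s ∈ S, s ≠ v → g s < g v := by
      intro s hs hsv
      have hsP := subset_convexHull ℝ (S : Set (Fin n → ℝ)) hs
      rw [hv'.2]
      refine lt_of_le_of_ne (hg s hsP) fun h => hsv ?_
      have : s ∈ ({v} : Set (Fin n → ℝ)) := hF ▸ ⟨hsP, h⟩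
      exact this
    refine ⟨?_, g, hlt⟩
    by_contra hvS
    have : convexHull ℝ (S : Set (Fin n → ℝ)) ⊆ {x | g x < g v} :=
      convexHull_min (fun s hs => hlt s hs fun h => hvS (h ▸ hs))
        (convex_halfSpace_lt g.isLinear _)
    exact lt_irrefl (g v) (this hv'.1)

/-- Converse of `IsVertex.exists_functional`. -/
theorem isVertex_of_functional {n : ℕ} {S : Finset (Fin n → ℝ)} {v : Fin n → ℝ} (hv : v ∈ S)
    (g : (Fin n → ℝ) →ₗ[ℝ] ℝ) (hg : ∀ s ∈ S, s ≠ v → g s < g v) :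
    IsVertex (convexHull ℝ (S : Set (Fin n → ℝ))) v := by
  have hsub : convexHull ℝ (S : Set (Fin n → ℝ)) ⊆ {x | x = v ∨ g x < g v} := by
    refine convexHull_min (fun s hs => or_iff_not_imp_left.2 (hg s hs)) ?_
    rw [convex_iff_forall_pos]
    rintro x hx y hy a b ha hb hab
    simp only [Set.mem_ofPred_eq, map_add, map_smul, smul_eq_mul] at hx hy ⊢
    have hb' : b = 1 - a := by linarith
    rcases hx with rfl | hx
    · rcases hy with rfl | hy
      · left; rw [← add_smul, hab, one_smul]
      · right; subst hb'; nlinarith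
    · right
      have hy' : g y ≤ g v := by
        rcases hy with rfl | hy
        · exact le_rfl
        · exact hy.le
      subst hb'; nlinarith
  refine Or.inr (Or.inr ⟨g, g v, fun x hx => ?_, ?_⟩)
  · rcases hsub hx with h | h
    · rw [h]
    · exact h.le
  · ext x
    constructor
    · rintro rfl
      exact ⟨subset_convexHull ℝ _ hv, rfl⟩
    · rintro ⟨hx, hxe⟩
      exact (hsub hx).resolve_right hxe.not_lt

theorem IsFacet.exists_functional {n : ℕ} {P F : Set (Fin n → ℝ)} (hF : IsFacet P F) :
    ∃ (f : (Fin n → ℝ) →ₗ[ℝ] ℝ) (c : ℝ), (∀ x ∈ P, f x ≤ c) ∧ F = {x ∈ P | f x = c} := by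
  obtain ⟨h | h | h, hne, hdim⟩ := hF
  · exact absurd h hne.ne_empty
  · rw [h] at hdim; omega
  · exact h

open Module in
/-- A nonzero direction `z` of the polytope with `h z ≥ 0`, for some `h` with its strict maximum at
`v`, leaves the polytope through a facet `F` at `v`. The conclusion holds for every functional
defining `F`, so that it can be applied to functionals chosen beforehand. -/
theorem exists_facet_pos {n : ℕ} {S : Finset (Fin n → ℝ)} {v : Fin n → ℝ} (hv : v ∈ S)
    (h : (Fin n → ℝ) →ₗ[ℝ] ℝ) (hh : ∀ s ∈ S, s ≠ v → h s < h v) {z : Fin n → ℝ}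
    (hzW : z ∈ vectorSpan ℝ (convexHull ℝ (S : Set (Fin n → ℝ)))) (hz0 : z ≠ 0) (hz : 0 ≤ h z) :
    ∃ F, IsFacet (convexHull ℝ (S : Set (Fin n → ℝ))) F ∧ v ∈ F ∧
      ∀ (f : (Fin n → ℝ) →ₗ[ℝ] ℝ) (c : ℝ), (∀ x ∈ convexHull ℝ (S : Set (Fin n → ℝ)), f x ≤ c) →
        F = {x ∈ convexHull ℝ (S : Set (Fin n → ℝ)) | f x = c} → 0 < f z := by
  classical
  set P := convexHull ℝ (S : Set (Fin n → ℝ)) with hP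
  have hSP : ∀ s ∈ S, s ∈ P := fun s hs => subset_convexHull ℝ _ hs
  -- `h` itself may vanish at `z`; a small perturbation of it does not
  obtain ⟨f₀, hf₀, hf₀z⟩ : ∃ f : (Fin n → ℝ) →ₗ[ℝ] ℝ, (∀ s ∈ S, f s ≤ f v) ∧ 0 < f z := by
    obtain ⟨k, hk⟩ : ∃ k : (Fin n → ℝ) →ₗ[ℝ] ℝ, 0 < k z := by
      obtain ⟨k, hk, -⟩ := Submodule.exists_le_ker_of_notMem
        (show z ∉ (⊥ : Submodule ℝ (Fin n → ℝ)) by simpa using hz0)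
      rcases lt_or_gt_of_ne hk with h | h
      · exact ⟨-k, by simpa using h⟩
      · exact ⟨k, h⟩
    obtain ⟨ε, hε, hεS⟩ := exists_perturb (S.erase v) (fun s => h (s - v)) (fun s => k (s - v))
      (fun s hs => by
        rw [Finset.mem_erase] at hs
        have := hh s hs.2 hs.1
        simp only [map_sub]; linarith)
      (fun s hs h0 => by
        rw [Finset.mem_erase] at hs
        have := hh s hs.2 hs.1
        simp only [map_sub] at h0; linarith)
    refine ⟨h + ε • k, fun s hs => ?_, ?_⟩
    · by_cases hsv : s = v
      · rw [hsv]
      · have := hεS s (Finset.mem_erase.2 ⟨hsv, hs⟩)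
        simp only [map_sub] at this
        simp only [LinearMap.add_apply, LinearMap.smul_apply, smul_eq_mul]
        linarith
    · simp only [LinearMap.add_apply, LinearMap.smul_apply, smul_eq_mul]
      have := mul_pos hε hk
      linarith
  have hW : vectorSpan ℝ P = Submodule.span ℝ ((S.image fun s => s - v : Finset _) : Set (Fin n → ℝ)) := by
    rw [vectorSpan_hull (v := v) hv, Finset.coe_image]
  obtain ⟨f, hf, hfz, hrank⟩ := cone_facet (S.image fun s => s - v) (hW ▸ hzW) f₀
    (by
      intro s hs
      obtain ⟨t, ht, rfl⟩ := Finset.mem_image.1 hs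
      have := hf₀ t ht
      simp only [map_sub]; linarith) hf₀z
  rw [← hW] at hrank
  have hfS : ∀ s ∈ S, f s ≤ f v := fun s hs => by
    have := hf _ (Finset.mem_image_of_mem _ hs)
    simp only [map_sub] at this; linarith
  have hfP : ∀ x ∈ P, f x ≤ f v := fun x hx => le_of_mem_hull hfS hx
  set F := {x ∈ P | f x = f v} with hF
  have hvF : v ∈ F := ⟨hSP v hv, rfl⟩
  have hspan : Submodule.span ℝ {s | s ∈ S.image (fun s => s - v) ∧ f s = 0} ≤ vectorSpan ℝ F := by
    refine Submodule.span_le.2 ?_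
    rintro _ ⟨hs, h0⟩
    obtain ⟨t, ht, rfl⟩ := Finset.mem_image.1 hs
    refine vsub_mem_vectorSpan ℝ (s := F) ⟨hSP t ht, ?_⟩ hvF
    rw [map_sub, sub_eq_zero] at h0
    exact h0
  have hFW : vectorSpan ℝ F ≤ vectorSpan ℝ P ⊓ f.ker := by
    refine le_inf (vectorSpan_mono ℝ fun x hx => hx.1) ?_
    rw [vectorSpan_eq_span_vsub_set_right ℝ hvF]
    refine Submodule.span_le.2 ?_
    rintro _ ⟨x, hx, rfl⟩
    change f (x - v) = 0
    rw [map_sub, hx.2, sub_self]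
  have hlt : finrank ℝ (vectorSpan ℝ P ⊓ f.ker : Submodule ℝ (Fin n → ℝ)) < finrank ℝ (vectorSpan ℝ P) := by
    refine Submodule.finrank_lt_finrank_of_lt (lt_of_le_of_ne inf_le_left fun h => ?_)
    have : z ∈ vectorSpan ℝ P ⊓ f.ker := h.symm ▸ hzW
    exact hfz.ne' this.2
  have hr1 := Submodule.finrank_mono hspan
  have hr2 := Submodule.finrank_mono hFW
  have hFeq : vectorSpan ℝ F = vectorSpan ℝ P ⊓ f.ker :=
    Submodule.eq_of_le_of_finrank_eq hFW (by omega)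
  refine ⟨F, ⟨Or.inr (Or.inr ⟨f, f v, hfP, rfl⟩), ⟨v, hvF⟩, ?_⟩, hvF, ?_⟩
  · unfold sdim; omega
  -- on the directions of `P`, both `f` and `f'` have kernel `vectorSpan ℝ F` and are negative towards
  -- `p`, so they are positive multiples of each other
  · intro f' c hf' hF'
    have hvF' : f' v = c := by
      have : v ∈ {x ∈ P | f' x = c} := hF' ▸ hvF
      exact this.2
    obtain ⟨p, hpS, hp⟩ : ∃ p ∈ S, f p < f v := by
      by_contra! hcon
      have : vectorSpan ℝ P ≤ f.ker := by
        rw [hW]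
        refine Submodule.span_le.2 fun s hs => ?_
        obtain ⟨t, ht, rfl⟩ := Finset.mem_image.1 hs
        change f (t - v) = 0
        rw [map_sub, sub_eq_zero]
        exact le_antisymm (hfS t ht) (hcon t ht)
      exact hfz.ne' (this hzW)
    have hp' : f' p < f' v := by
      rw [hvF']
      refine lt_of_le_of_ne (hf' p (hSP p hpS)) fun h => hp.ne ?_
      have : p ∈ F := hF' ▸ ⟨hSP p hpS, h⟩
      exact this.2
    have hker : ∀ k ∈ vectorSpan ℝ F, f' k = 0 := by
      intro k hk
      rw [vectorSpan_eq_span_vsub_set_right ℝ hvF] at hk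
      refine (Submodule.span_le (p := f'.ker)).2 ?_ hk
      rintro _ ⟨x, hx, rfl⟩
      change f' (x - v) = 0
      rw [hF'] at hx
      rw [map_sub, hx.2, hvF', sub_self]
    set α := f z / f (p - v) with hα
    have hpv : f (p - v) < 0 := by rw [map_sub]; linarith
    have hα0 : α < 0 := div_neg_of_pos_of_neg hfz hpv
    have hk := hker (z - α • (p - v)) (by
      rw [hFeq]
      refine ⟨Submodule.sub_mem _ hzW (Submodule.smul_mem _ _
        (vsub_mem_vectorSpan ℝ (hSP p hpS) (hSP v hv))), ?_⟩
      change f (z - α • (p - v)) = 0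
      rw [map_sub, map_smul, smul_eq_mul, hα, div_mul_cancel₀ _ hpv.ne, sub_self])
    rw [map_sub, map_smul, smul_eq_mul, map_sub, sub_eq_zero] at hk
    rw [hk]
    exact mul_pos_of_neg_of_neg hα0 (by linarith)

/-! ### Edges of a simple polytope -/

/-- The functionals of the facets through a vertex are jointly injective on the directions of the
polytope. -/
theorem eq_zero_of_facets {n : ℕ} {S : Finset (Fin n → ℝ)} {v : Fin n → ℝ}
    (hd : 0 < sdim (convexHull ℝ (S : Set (Fin n → ℝ))))
    (hv : IsVertex (convexHull ℝ (S : Set (Fin n → ℝ))) v)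
    (f : Set (Fin n → ℝ) → (Fin n → ℝ) →ₗ[ℝ] ℝ) (c : Set (Fin n → ℝ) → ℝ)
    (hf : ∀ F, IsFacet (convexHull ℝ (S : Set (Fin n → ℝ))) F →
      (∀ x ∈ convexHull ℝ (S : Set (Fin n → ℝ)), f F x ≤ c F) ∧
        F = {x ∈ convexHull ℝ (S : Set (Fin n → ℝ)) | f F x = c F})
    {z : Fin n → ℝ} (hzW : z ∈ vectorSpan ℝ (convexHull ℝ (S : Set (Fin n → ℝ))))
    (hz : ∀ F, IsFacet (convexHull ℝ (S : Set (Fin n → ℝ))) F → v ∈ F → f F z = 0) : z = 0 := by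
  by_contra hz0
  obtain ⟨hvS, g, hg⟩ := hv.exists_functional hd
  rcases le_total 0 (g z) with h | h
  · obtain ⟨F, hF, hvF, hpos⟩ := exists_facet_pos hvS g hg hzW hz0 h
    exact (hpos (f F) (c F) (hf F hF).1 (hf F hF).2).ne' (hz F hF hvF)
  · obtain ⟨F, hF, hvF, hpos⟩ := exists_facet_pos hvS g hg (Submodule.neg_mem _ hzW)
      (neg_ne_zero.2 hz0) (by simpa using h)
    refine (hpos (f F) (c F) (hf F hF).1 (hf F hF).2).ne' ?_
    rw [map_neg, hz F hF hvF, neg_zero]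

/-- The facets through a vertex have no other common point. -/
theorem eq_of_facets_subset {n : ℕ} {S : Finset (Fin n → ℝ)} {x y : Fin n → ℝ}
    (hd : 0 < sdim (convexHull ℝ (S : Set (Fin n → ℝ))))
    (hx : IsVertex (convexHull ℝ (S : Set (Fin n → ℝ))) x)
    (hy : y ∈ convexHull ℝ (S : Set (Fin n → ℝ)))
    (hxy : ∀ F, IsFacet (convexHull ℝ (S : Set (Fin n → ℝ))) F → x ∈ F → y ∈ F) : y = x := by
  have hex : ∀ F, ∃ (f : (Fin n → ℝ) →ₗ[ℝ] ℝ) (c : ℝ),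
      IsFacet (convexHull ℝ (S : Set (Fin n → ℝ))) F →
      (∀ x ∈ convexHull ℝ (S : Set (Fin n → ℝ)), f x ≤ c) ∧
        F = {x ∈ convexHull ℝ (S : Set (Fin n → ℝ)) | f x = c} := fun F => by
    by_cases hF : IsFacet (convexHull ℝ (S : Set (Fin n → ℝ))) F
    · obtain ⟨f, c, h⟩ := hF.exists_functional
      exact ⟨f, c, fun _ => h⟩
    · exact ⟨0, 0, fun h => absurd h hF⟩
  choose f c hf using hex
  have hxP := subset_convexHull ℝ (S : Set (Fin n → ℝ)) (hx.exists_functional hd).1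
  refine sub_eq_zero.1 (eq_zero_of_facets hd hx f c hf (vsub_mem_vectorSpan ℝ hy hxP) ?_)
  intro F hF hxF
  have hyF := hxy F hF hxF
  rw [(hf F hF).2] at hxF hyF
  rw [map_sub, hxF.2, hyF.2, sub_self]

open Module in
/-- In a simple polytope, each edge at a vertex `v`, described as the intersection of all facets
through `v` but one, has exactly one further vertex. -/
theorem exists_neighbour {n : ℕ} {S : Finset (Fin n → ℝ)} {v : Fin n → ℝ}
    (hd : 1 < sdim (convexHull ℝ (S : Set (Fin n → ℝ))))
    (hs : IsSimplePolytope (convexHull ℝ (S : Set (Fin n → ℝ))))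
    (hv : IsVertex (convexHull ℝ (S : Set (Fin n → ℝ))) v)
    {F₀ : Set (Fin n → ℝ)} (hF₀ : IsFacet (convexHull ℝ (S : Set (Fin n → ℝ))) F₀) (hvF₀ : v ∈ F₀) :
    ∃ x, x ≠ v ∧ IsVertex (convexHull ℝ (S : Set (Fin n → ℝ))) x ∧
      (∀ F, IsFacet (convexHull ℝ (S : Set (Fin n → ℝ))) F → v ∈ F → F ≠ F₀ → x ∈ F) ∧
      ∀ y, y ≠ v → IsVertex (convexHull ℝ (S : Set (Fin n → ℝ))) y →
        (∀ F, IsFacet (convexHull ℝ (S : Set (Fin n → ℝ))) F → v ∈ F → F ≠ F₀ → y ∈ F) → y = x := by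
  classical
  have hd0 : 0 < sdim (convexHull ℝ (S : Set (Fin n → ℝ))) := by omega
  have hex : ∀ F, ∃ (f : (Fin n → ℝ) →ₗ[ℝ] ℝ) (c : ℝ),
      IsFacet (convexHull ℝ (S : Set (Fin n → ℝ))) F →
      (∀ x ∈ convexHull ℝ (S : Set (Fin n → ℝ)), f x ≤ c) ∧
        F = {x ∈ convexHull ℝ (S : Set (Fin n → ℝ)) | f x = c} := fun F => by
    by_cases hF : IsFacet (convexHull ℝ (S : Set (Fin n → ℝ))) F
    · obtain ⟨f, c, h⟩ := hF.exists_functional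
      exact ⟨f, c, fun _ => h⟩
    · exact ⟨0, 0, fun h => absurd h hF⟩
  choose f c hf using hex
  have hinj := fun {z} hz => eq_zero_of_facets (z := z) hd0 hv f c hf hz
  obtain ⟨hvS, -⟩ := hv.exists_functional hd0
  have hcard := hs v hv
  have hvert : ∀ y, IsVertex (convexHull ℝ (S : Set (Fin n → ℝ))) y → y ∈ S ∧
    ∃ g : (Fin n → ℝ) →ₗ[ℝ] ℝ, ∀ s ∈ S, s ≠ y → g s < g y := fun y hy => hy.exists_functional hd0
  have hpos := fun h hh {z} h1 h2 h3 => exists_facet_pos (S := S) (v := v) hvS h hh (z := z) h1 h2 h3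
  have hmk := fun {x} h1 g h2 => isVertex_of_functional (S := S) (v := x) h1 g h2
  have hSP : ∀ s ∈ S, s ∈ convexHull ℝ (S : Set (Fin n → ℝ)) := fun s hs => subset_convexHull ℝ _ hs
  set P := convexHull ℝ (S : Set (Fin n → ℝ)) with hP
  have hmem : ∀ {F x}, IsFacet P F → x ∈ P → (x ∈ F ↔ f F x = c F) := by
    intro F x hF hx
    conv_lhs => rw [(hf F hF).2]
    exact ⟨fun h => h.2, fun h => ⟨hx, h⟩⟩
  have hvP := hSP v hvS
  have hfin : {F | IsFacet P F ∧ v ∈ F}.Finite := Set.finite_of_ncard_ne_zero (by omega)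
  rw [Set.ncard_eq_toFinset_card _ hfin] at hcard
  set A := hfin.toFinset with hA
  have hAmem : ∀ F, F ∈ A ↔ IsFacet P F ∧ v ∈ F := fun F => by simp [hA]
  set B := A.erase F₀ with hB
  have hBmem : ∀ F, F ∈ B ↔ F ≠ F₀ ∧ IsFacet P F ∧ v ∈ F := fun F => by
    rw [hB, Finset.mem_erase, hAmem]
  have hBcard : B.card < sdim P := by
    rw [← hcard, hB]
    exact Finset.card_erase_lt_of_mem ((hAmem _).2 ⟨hF₀, hvF₀⟩)
  -- a nonzero direction along which only the functional of `F₀` varies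
  obtain ⟨z, hzW, hz0, hzB⟩ : ∃ z ∈ vectorSpan ℝ P, z ≠ 0 ∧ ∀ F ∈ B, f F z = 0 := by
    have hker := LinearMap.ker_ne_bot_of_finrank_lt
      (f := LinearMap.pi fun F : B => (f F).domRestrict (vectorSpan ℝ P)) (by
        rw [finrank_fintype_fun_eq_card, Fintype.card_coe]
        exact hBcard)
    obtain ⟨z, hz, hz0⟩ := Submodule.exists_mem_ne_zero_of_ne_bot hker
    refine ⟨z, z.2, by simpa using hz0, fun F hF => ?_⟩
    exact congrFun (LinearMap.mem_ker.1 hz) ⟨F, hF⟩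
  obtain ⟨z, hzW, hz0, hzB, hzF⟩ : ∃ z ∈ vectorSpan ℝ P, z ≠ 0 ∧ (∀ F ∈ B, f F z = 0) ∧
      f F₀ z ≤ 0 := by
    rcases le_total (f F₀ z) 0 with h | h
    · exact ⟨z, hzW, hz0, hzB, h⟩
    · exact ⟨-z, Submodule.neg_mem _ hzW, neg_ne_zero.2 hz0,
        fun F hF => by rw [map_neg, hzB F hF, neg_zero], by simpa using h⟩
  set h : (Fin n → ℝ) →ₗ[ℝ] ℝ := ∑ F ∈ B, f F with hh
  have happ : ∀ x, h x = ∑ F ∈ B, f F x := fun x => by rw [hh, LinearMap.sum_apply]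
  have hfle : ∀ x ∈ P, ∀ F ∈ B, f F x ≤ f F v := by
    intro x hx F hF
    have := (hBmem F).1 hF
    rw [(hmem this.2.1 hvP).1 this.2.2]
    exact (hf F this.2.1).1 x hx
  have hle : ∀ x ∈ P, h x ≤ h v := fun x hx => by
    rw [happ, happ]; exact Finset.sum_le_sum (hfle x hx)
  have hiff : ∀ x ∈ P, (h x = h v ↔ ∀ F, IsFacet P F → v ∈ F → F ≠ F₀ → x ∈ F) := by
    intro x hx
    rw [happ, happ, Finset.sum_eq_sum_iff_of_le (hfle x hx)]
    constructor
    · intro H F hF hvF hne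
      rw [hmem hF hx, H F ((hBmem F).2 ⟨hne, hF, hvF⟩)]
      exact (hmem hF hvP).1 hvF
    · intro H F hF
      obtain ⟨hne, hF, hvF⟩ := (hBmem F).1 hF
      rw [(hmem hF hx).1 (H F hF hvF hne), (hmem hF hvP).1 hvF]
  have hzero : ∀ x ∈ P, h x = h v → ∀ F, IsFacet P F → v ∈ F → F ≠ F₀ → f F (x - v) = 0 := by
    intro x hx hxv F hF hvF hne
    rw [map_sub, (hmem hF hx).1 ((hiff x hx).1 hxv F hF hvF hne), (hmem hF hvP).1 hvF, sub_self]
  -- points of the edge are collinear with `v`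
  have hcol : ∀ x ∈ P, ∀ y ∈ P, h x = h v → h y = h v →
      f F₀ (y - v) • (x - v) = f F₀ (x - v) • (y - v) := by
    intro x hx y hy hxv hyv
    refine sub_eq_zero.1 (hinj (Submodule.sub_mem _
      (Submodule.smul_mem _ _ (vsub_mem_vectorSpan ℝ hx hvP))
      (Submodule.smul_mem _ _ (vsub_mem_vectorSpan ℝ hy hvP))) ?_)
    intro F hF hvF
    rw [map_sub (f F), map_smul, map_smul, smul_eq_mul, smul_eq_mul]
    by_cases hne : F = F₀
    · rw [hne]; ring
    · rw [hzero x hx hxv F hF hvF hne, hzero y hy hyv F hF hvF hne]; ring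
  have hneg : ∀ x ∈ P, x ≠ v → h x = h v → f F₀ (x - v) < 0 := by
    intro x hx hne hxv
    refine lt_of_le_of_ne ?_ fun h0 => hne (sub_eq_zero.1 (hinj (vsub_mem_vectorSpan ℝ hx hvP) ?_))
    · rw [map_sub, sub_nonpos, (hmem hF₀ hvP).1 hvF₀]
      exact (hf F₀ hF₀).1 x hx
    · intro F hF hvF
      by_cases hne : F = F₀
      · rw [hne]; exact h0
      · exact hzero x hx hxv F hF hvF hne
  have hnon : (S.filter fun s => s ≠ v ∧ h s = h v).Nonempty := by
    by_contra hcon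
    rw [Finset.not_nonempty_iff_eq_empty, Finset.filter_eq_empty_iff] at hcon
    have hzh : h z = 0 := by rw [happ]; exact Finset.sum_eq_zero hzB
    obtain ⟨F, hF, hvF, hFz⟩ := hpos h
      (fun s hs hsv => lt_of_le_of_ne (hle s (hSP s hs)) fun h0 => hcon hs ⟨hsv, h0⟩) hzW hz0 hzh.ge
    have := hFz (f F) (c F) (hf F hF).1 (hf F hF).2
    by_cases hne : F = F₀
    · rw [hne] at this; exact absurd this (not_lt.2 hzF)
    · exact this.ne' (hzB F ((hBmem F).2 ⟨hne, hF, hvF⟩))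
  -- the end of the edge furthest from `v`
  obtain ⟨x, hx, hmin⟩ := Finset.exists_min_image _ (f F₀) hnon
  obtain ⟨hxS, hxv, hxh⟩ := Finset.mem_filter.1 hx
  have hxP := hSP x hxS
  have hxneg := hneg x hxP hxv hxh
  refine ⟨x, hxv, ?_, (hiff x hxP).1 hxh, ?_⟩
  · obtain ⟨ε, hε, hεS⟩ := exists_perturb (S.erase x) (fun s => h s - h v)
      (fun s => f F₀ x - f F₀ s)
      (fun s hs => sub_nonpos.2 (hle s (hSP s (Finset.mem_of_mem_erase hs))))
      (fun s hs h0 => by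
        obtain ⟨hsx, hsS⟩ := Finset.mem_erase.1 hs
        have hsh := sub_eq_zero.1 h0
        by_cases hsv : s = v
        · rw [hsv, ← map_sub]; exact hxneg
        · refine sub_neg.2 (lt_of_le_of_ne (hmin s (Finset.mem_filter.2 ⟨hsS, hsv, hsh⟩)) fun he => hsx ?_)
          have h1 := hcol x hxP s (hSP s hsS) hxh hsh
          rw [map_sub, ← he, ← map_sub] at h1
          exact (sub_left_injective (smul_right_injective _ hxneg.ne h1)).symm)
    refine hmk hxS (h - ε • f F₀) fun s hs hsx => ?_
    have := hεS s (Finset.mem_erase.2 ⟨hsx, hs⟩)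
    simp only [LinearMap.sub_apply, LinearMap.smul_apply, smul_eq_mul]
    rw [hxh]
    linarith
  · intro y hyv hy hyF
    by_contra hyx
    obtain ⟨hyS, g, hg⟩ := hvert y hy
    have hyP := hSP y hyS
    have hyh := (hiff y hyP).2 hyF
    have hyneg := hneg y hyP hyv hyh
    -- `y` would lie strictly between `v` and `x`, yet `g` is larger at `y` than at both
    have h1 := congrArg g (hcol x hxP y hyP hxh hyh)
    have h2 := hmin y (Finset.mem_filter.2 ⟨hyS, hyv, hyh⟩)
    have h3 := hg v hvS (Ne.symm hyv)
    have h4 := hg x hxS (Ne.symm hyx)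
    rw [map_smul, map_smul, smul_eq_mul, smul_eq_mul, map_sub g, map_sub g] at h1
    have h5 : f F₀ (x - v) ≤ f F₀ (y - v) := by rw [map_sub, map_sub]; linarith
    have h6 := mul_lt_mul_of_neg_left (show g x - g v < g y - g v by linarith) hyneg
    have h7 := mul_le_mul_of_nonneg_right h5 (show 0 ≤ g y - g v by linarith)
    linarith

/-! ### Disjoint complementary pairs -/

theorem stmt0 {n d : ℕ} (hd : 1 < d) (P : Set (Fin n → ℝ))
    (hP : IsPolytope P) (hdim : sdim P = d) (hsimple : IsSimplePolytope P)
    (u v : Fin n → ℝ) (hu : IsVertex P u) (hv : IsVertex P v) (huv : u ≠ v)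
    (hcomp : Complementary P u v) :
    ∃ a b a' b' : Fin n → ℝ,
      IsVertex P a ∧ IsVertex P b ∧ IsVertex P a' ∧ IsVertex P b' ∧
      a ≠ b ∧ a ≠ a' ∧ a ≠ b' ∧ b ≠ a' ∧ b ≠ b' ∧ a' ≠ b' ∧
      Complementary P a b ∧ Complementary P a' b' := by
  classical
  obtain ⟨S, rfl⟩ := hP
  have hd1 : 1 < sdim (convexHull ℝ (S : Set (Fin n → ℝ))) := hdim ▸ hd
  have hd0 : 0 < sdim (convexHull ℝ (S : Set (Fin n → ℝ))) := by omega
  have hnb := fun x hx F hF hxF =>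
    exists_neighbour hd1 hsimple (v := x) hx (F₀ := F) hF hxF
  have hsub := fun x y hx hy => eq_of_facets_subset (x := x) (y := y) hd0 hx hy
  have hVS : ∀ x, IsVertex (convexHull ℝ (S : Set (Fin n → ℝ))) x → x ∈ S :=
    fun x hx => (hx.exists_functional hd0).1
  have hSP : ∀ s ∈ S, s ∈ convexHull ℝ (S : Set (Fin n → ℝ)) := fun s hs => subset_convexHull ℝ _ hs
  set P := convexHull ℝ (S : Set (Fin n → ℝ)) with hP
  have : Finite {x // IsVertex P x} := (S.finite_toSet.subset hVS).to_subtype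
  have := Fintype.ofFinite {x // IsVertex P x}
  have hfin : ∀ x : {x // IsVertex P x}, {F | IsFacet P F ∧ x.1 ∈ F}.Finite := fun x =>
    Set.finite_of_ncard_ne_zero (by rw [hsimple x.1 x.2]; omega)
  set φ : {x // IsVertex P x} → Finset (Set (Fin n → ℝ)) := fun x => (hfin x).toFinset with hφ
  have hmem : ∀ x F, F ∈ φ x ↔ IsFacet P F ∧ x.1 ∈ F := fun x F => by simp [hφ]
  have hcard : ∀ x, (φ x).card = d := fun x => by
    rw [hφ, ← Set.ncard_eq_toFinset_card _ (hfin x), hsimple x.1 x.2, hdim]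
  have hpiv : ∀ x, ∀ F ∈ φ x, ∃! y, y ≠ x ∧ (φ x).erase F ⊆ φ y := by
    intro x F hF
    have hF' := (hmem x F).1 hF
    have hkey : ∀ y : {x // IsVertex P x}, (φ x).erase F ⊆ φ y ↔
        ∀ G, IsFacet P G → x.1 ∈ G → G ≠ F → y.1 ∈ G := by
      intro y
      constructor
      · intro H G hG hxG hne
        exact ((hmem y G).1 (H (Finset.mem_erase.2 ⟨hne, (hmem x G).2 ⟨hG, hxG⟩⟩))).2
      · intro H G hG
        rw [Finset.mem_erase, hmem] at hG
        exact (hmem y G).2 ⟨hG.2.1, H G hG.2.1 hG.2.2 hG.1⟩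
    obtain ⟨y, hyx, hy, hyF, huniq⟩ := hnb x.1 x.2 F hF'.1 hF'.2
    refine ⟨⟨y, hy⟩, ⟨fun h => hyx (congrArg Subtype.val h), (hkey ⟨y, hy⟩).2 hyF⟩, ?_⟩
    rintro w ⟨hwx, hw⟩
    exact Subtype.ext (huniq w.1 (fun h => hwx (Subtype.ext h)) w.2 ((hkey w).1 hw))
  have hinj : Function.Injective φ := by
    intro x y hxy
    refine Subtype.ext (hsub x.1 y.1 x.2 (hSP _ (hVS _ y.2)) fun F hF hxF => ?_).symm
    have : F ∈ φ y := hxy ▸ (hmem x F).2 ⟨hF, hxF⟩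
    exact ((hmem y F).1 this).2
  have hdis : ∀ x y : {x // IsVertex P x}, Disjoint (φ x) (φ y) ↔ Complementary P x.1 y.1 := by
    intro x y
    rw [Finset.disjoint_left]
    constructor
    · intro H F hF hxy
      exact H ((hmem x F).2 ⟨hF, hxy.1⟩) ((hmem y F).2 ⟨hF, hxy.2⟩)
    · intro H F hx hy
      exact H F ((hmem x F).1 hx).1 ⟨((hmem x F).1 hx).2, ((hmem y F).1 hy).2⟩
  have hne : ∀ x y, Disjoint (φ x) (φ y) → x.1 ≠ y.1 := by
    intro x y hxy h
    obtain rfl := Subtype.ext h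
    have := hcard x
    rw [disjoint_self.1 hxy, Finset.bot_eq_empty, Finset.card_empty] at this
    omega
  obtain ⟨a, b, a', b', h1, h2, h3, h4, hab, hab'⟩ :=
    comb φ d hd hcard hpiv hinj (u := ⟨u, hu⟩) (v := ⟨v, hv⟩) ((hdis _ _).2 hcomp)
  have hval : ∀ x y : {x // IsVertex P x}, x ≠ y → x.1 ≠ y.1 := fun x y h h' => h (Subtype.ext h')
  exact ⟨a, b, a', b', a.2, b.2, a'.2, b'.2, hne _ _ hab, hval _ _ h1, hval _ _ h2, hval _ _ h3,
    hval _ _ h4, hne _ _ hab', (hdis _ _).1 hab, (hdis _ _).1 hab'⟩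
end

section
/- Let P be a simplicial polytope of dimension d > 1 with precisely 2d vertices. Then the total number of unordered pairs of disjoint facets of P is even, and these pairs are pairwise disjoint: if {F, G} and {F, H} are both pairs of disjoint facets, then G = H. -/
/-! ### Double counting modulo 2 -/

/-- For fixed `A` avoiding `v₀`, the members of `Z` of the form `{x} ∪ (V \ A \ {v₀})` with `x ∈ A`
are exactly those that avoid `v₀` and meet `A` in a single point. -/
lemma card_exchange {α : Type*} [DecidableEq α] (V : Finset α) (d : ℕ)
    (hV : V.card = 2 * d) (Z : Finset (Finset α)) (hZ : ∀ A ∈ Z, A ⊆ V ∧ A.card = d)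
    (v₀ : α) (hv₀ : v₀ ∈ V) (A : Finset α) (hA : A ∈ Z) (hvA : v₀ ∉ A) :
    (A.filter (fun x => insert x ((V \ A).erase v₀) ∈ Z)).card =
      ((Z.filter (fun B => v₀ ∉ B)).filter (fun B => (A ∩ B).card = 1)).card := by
  obtain ⟨hAV, hAd⟩ := hZ A hA
  have hRc : ((V \ A).erase v₀).card = d - 1 := by
    rw [Finset.card_erase_of_mem (by simp [hv₀, hvA]), Finset.card_sdiff_of_subset hAV]
    omega
  apply Finset.card_bij (fun x _ => insert x ((V \ A).erase v₀))
  · intro x hx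
    simp only [Finset.mem_filter] at hx ⊢
    obtain ⟨hxA, hxZ⟩ := hx
    refine ⟨⟨hxZ, ?_⟩, ?_⟩
    · simp only [Finset.mem_insert, Finset.mem_erase]
      rintro (h | h)
      · exact hvA (h ▸ hxA)
      · exact h.1 rfl
    · rw [Finset.card_eq_one]
      refine ⟨x, ?_⟩
      ext t
      simp only [Finset.mem_inter, Finset.mem_insert, Finset.mem_erase, Finset.mem_sdiff,
        Finset.mem_singleton]
      constructor
      · rintro ⟨h1, h2 | h2⟩
        · exact h2
        · exact absurd h1 h2.2.2
      · rintro rfl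
        exact ⟨hxA, Or.inl rfl⟩
  · intro x hx y hy hxy
    simp only [Finset.mem_filter] at hx hy
    have hxy : insert x ((V \ A).erase v₀) = insert y ((V \ A).erase v₀) := hxy
    have h : x ∈ insert y ((V \ A).erase v₀) := hxy ▸ Finset.mem_insert_self _ _
    simp only [Finset.mem_insert, Finset.mem_erase, Finset.mem_sdiff] at h
    rcases h with h | h
    · exact h
    · exact absurd hx.1 h.2.2
  · intro B hB
    simp only [Finset.mem_filter] at hB
    obtain ⟨⟨hBZ, hvB⟩, hAB⟩ := hB
    obtain ⟨hBV, hBd⟩ := hZ B hBZ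
    obtain ⟨x, hx⟩ := Finset.card_eq_one.1 hAB
    have hxm : x ∈ A ∩ B := by rw [hx]; simp
    have hxA := (Finset.mem_inter.1 hxm).1
    have hxB := (Finset.mem_inter.1 hxm).2
    have hsub : B ⊆ insert x ((V \ A).erase v₀) := by
      intro t ht
      by_cases htA : t ∈ A
      · have : t ∈ A ∩ B := Finset.mem_inter.2 ⟨htA, ht⟩
        rw [hx] at this
        simp [Finset.mem_singleton.1 this]
      · have : t ≠ v₀ := fun h => hvB (h ▸ ht)
        simp [this, hBV ht, htA]
    have hpos : 0 < d := hAd ▸ Finset.card_pos.2 ⟨x, hxA⟩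
    have heq : B = insert x ((V \ A).erase v₀) := by
      apply Finset.eq_of_subset_of_card_le hsub
      have := Finset.card_insert_le x ((V \ A).erase v₀)
      omega
    refine ⟨x, ?_, heq.symm⟩
    simp only [Finset.mem_filter]
    exact ⟨hxA, heq ▸ hBZ⟩

/-- In a family of `d`-subsets of a `2 d`-set, `d > 1`, such that every `(d-1)`-set is contained in
an even number of members, the number of complementary pairs is even. A pair is counted through its
member avoiding `v₀`. -/
lemma even_complementary {α : Type*} [DecidableEq α] (V : Finset α) (d : ℕ) (hd : 1 < d)
    (hV : V.card = 2 * d) (Z : Finset (Finset α)) (hZ : ∀ A ∈ Z, A ⊆ V ∧ A.card = d)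
    (hR : ∀ R ⊆ V, R.card + 1 = d → Even ((V \ R).filter (fun x => insert x R ∈ Z)).card)
    (v₀ : α) (hv₀ : v₀ ∈ V) :
    Even (Z.filter (fun A => v₀ ∉ A ∧ V \ A ∈ Z)).card := by
  set Z0 := Z.filter (fun A => v₀ ∉ A) with hZ0
  have key : ∀ A ∈ Z0, (if V \ A ∈ Z then (1 : ZMod 2) else 0) =
      ∑ B ∈ Z0, if (A ∩ B).card = 1 then (1 : ZMod 2) else 0 := by
    intro A hA
    obtain ⟨hAZ, hvA⟩ := Finset.mem_filter.1 hA
    obtain ⟨hAV, hAd⟩ := hZ A hAZ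
    have hv₀' : v₀ ∈ V \ A := by simp [hv₀, hvA]
    have hRc : ((V \ A).erase v₀).card + 1 = d := by
      rw [Finset.card_erase_add_one hv₀', Finset.card_sdiff_of_subset hAV]
      omega
    have hev := hR ((V \ A).erase v₀)
      ((Finset.erase_subset _ _).trans Finset.sdiff_subset) hRc
    have hcompl : V \ ((V \ A).erase v₀) = insert v₀ A := by
      ext t
      simp only [Finset.mem_sdiff, Finset.mem_erase, Finset.mem_insert]
      by_cases h1 : t = v₀
      · simp [h1, hv₀]
      · have := @hAV t
        tauto
    rw [hcompl, Finset.card_filter, Finset.sum_insert hvA, ← Finset.card_filter,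
      card_exchange V d hV Z hZ v₀ hv₀ A hAZ hvA, Finset.insert_erase hv₀'] at hev
    rw [Finset.sum_boole]
    rw [← ZMod.natCast_eq_zero_iff_even] at hev
    push_cast at hev
    rw [← hZ0] at hev
    -- in characteristic 2, `a + b = 0` means `a = b`
    have h2 : ∀ a b : ZMod 2, a + b = 0 → a = b := by decide
    exact h2 _ _ hev
  rw [← ZMod.natCast_eq_zero_iff_even, ← Finset.filter_filter, ← hZ0, Finset.card_filter]
  push_cast
  rw [Finset.sum_congr rfl key, ← Finset.sum_product']
  refine Finset.sum_involution (fun p _ => (p.2, p.1)) ?_ ?_ ?_ ?_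
  · rintro ⟨A, B⟩ _
    simp only [Finset.inter_comm B A]
    exact CharTwo.add_self_eq_zero _
  · rintro ⟨A, B⟩ hp hne h
    have hBA : B = A := congrArg Prod.fst h
    subst hBA
    have hB := hZ B (Finset.mem_filter.1 (Finset.mem_product.1 hp).1).1
    apply hne
    -- a set meets itself in `d > 1` points, so the diagonal contributes nothing
    simp only [Finset.inter_self, hB.2]
    rw [if_neg (by omega)]
  · rintro ⟨A, B⟩ hp
    simp only [Finset.mem_product] at hp ⊢
    exact hp.symm
  · rintro ⟨A, B⟩ _
    rfl

/-! ### Affine dimension and convex hulls -/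

lemma vectorSpan_le_ker {n : ℕ} {A : Set (Fin n → ℝ)} {f : (Fin n → ℝ) →ₗ[ℝ] ℝ} {c : ℝ}
    (h : ∀ a ∈ A, f a = c) : vectorSpan ℝ A ≤ LinearMap.ker f := by
  rw [vectorSpan_def, Submodule.span_le]
  rintro _ ⟨a, ha, b, hb, rfl⟩
  simp [h a ha, h b hb]

/-- The dimension drops strictly when passing to a subset on which some linear functional is
constant that is not constant on the whole set. -/
lemma finrank_vectorSpan_lt {n : ℕ} {A B : Set (Fin n → ℝ)} (hAB : A ⊆ B)
    {f : (Fin n → ℝ) →ₗ[ℝ] ℝ} {c : ℝ} (h : ∀ a ∈ A, f a = c) {p q : Fin n → ℝ}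
    (hp : p ∈ B) (hq : q ∈ B) (hpq : f p ≠ f q) :
    Module.finrank ℝ (vectorSpan ℝ A) < Module.finrank ℝ (vectorSpan ℝ B) := by
  apply Submodule.finrank_lt_finrank_of_lt
  refine lt_of_le_of_ne (vectorSpan_mono ℝ hAB) fun heq => hpq ?_
  have hm : p -ᵥ q ∈ vectorSpan ℝ B := vsub_mem_vectorSpan ℝ hp hq
  rw [← heq] at hm
  have := vectorSpan_le_ker h hm
  rw [LinearMap.mem_ker, vsub_eq_sub, map_sub] at this
  linarith

lemma sdim_convexHull {n : ℕ} (A : Set (Fin n → ℝ)) :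
    sdim (convexHull ℝ A) = Module.finrank ℝ (vectorSpan ℝ A) := by
  rw [sdim, ← direction_affineSpan, affineSpan_convexHull, direction_affineSpan]

lemma le_of_mem_convexHull {n : ℕ} {A : Set (Fin n → ℝ)} {f : (Fin n → ℝ) →ₗ[ℝ] ℝ} {c : ℝ}
    (h : ∀ a ∈ A, f a ≤ c) {x : Fin n → ℝ} (hx : x ∈ convexHull ℝ A) : f x ≤ c :=
  convexHull_min (t := {x | f x ≤ c}) h (convex_halfSpace_le f.isLinear c) hx

/-- The face of `conv V` cut out by a supporting hyperplane is spanned by the points of `V` on that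
hyperplane. -/
lemma face_eq {n : ℕ} {V A : Finset (Fin n → ℝ)} {f : (Fin n → ℝ) →ₗ[ℝ] ℝ} {c : ℝ} (hAV : A ⊆ V)
    (h : ∀ v ∈ V, f v ≤ c ∧ (f v = c ↔ v ∈ A)) :
    {x ∈ convexHull ℝ (V : Set (Fin n → ℝ)) | f x = c} = convexHull ℝ (A : Set (Fin n → ℝ)) := by
  apply Set.Subset.antisymm
  · rintro x ⟨hx, hfx⟩
    obtain ⟨w, hw0, hw1, hwx⟩ := Finset.mem_convexHull'.1 hx
    have hsum : ∑ y ∈ V, w y * (c - f y) = 0 := by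
      simp only [mul_sub, Finset.sum_sub_distrib, ← Finset.sum_mul, hw1]
      rw [← hwx, map_sum] at hfx
      simp only [map_smul, smul_eq_mul] at hfx
      rw [hfx]
      ring
    have hz := (Finset.sum_eq_zero_iff_of_nonneg
      (fun y hy => mul_nonneg (hw0 y hy) (sub_nonneg.2 (h y hy).1))).1 hsum
    have hw : ∀ y ∈ V, y ∉ A → w y = 0 := by
      intro y hy hyA
      rcases mul_eq_zero.1 (hz y hy) with h0 | h0
      · exact h0
      · exact absurd ((h y hy).2.1 (by linarith)) hyA
    refine Finset.mem_convexHull'.2 ⟨w, fun y hy => hw0 y (hAV hy), ?_, ?_⟩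
    · rw [← hw1]
      exact Finset.sum_subset hAV hw
    · rw [← hwx]
      exact Finset.sum_subset hAV fun y hy hyA => by rw [hw y hy hyA, zero_smul]
  · intro x hx
    refine ⟨convexHull_mono (by exact_mod_cast hAV) hx, le_antisymm ?_ ?_⟩
    · exact le_of_mem_convexHull (fun a ha => (h a (hAV ha)).1) hx
    · have : (-f) x ≤ -c := le_of_mem_convexHull (A := (A : Set (Fin n → ℝ)))
        (fun a ha => by simp [((h a (hAV ha)).2.2 ha)]) hx
      simpa using this

/-- A polytope has finitely many vertices and is their convex hull. They form a generating set of
minimal cardinality. -/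
lemma exists_vertices {n : ℕ} {P : Set (Fin n → ℝ)} (hP : IsPolytope P) :
    ∃ V : Finset (Fin n → ℝ), P = convexHull ℝ (V : Set (Fin n → ℝ)) ∧
      ∀ v, IsVertex P v ↔ v ∈ V := by
  classical
  have hex : ∃ m, ∃ S : Finset (Fin n → ℝ), S.card = m ∧
      P = convexHull ℝ (S : Set (Fin n → ℝ)) := by
    obtain ⟨S, hS⟩ := hP
    exact ⟨_, S, rfl, hS⟩
  obtain ⟨V, hVc, hV⟩ := Nat.find_spec hex
  have hmin : ∀ s ∈ V, s ∉ convexHull ℝ ((V.erase s : Finset _) : Set (Fin n → ℝ)) := by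
    intro s hs hsc
    refine Nat.find_min hex (m := (V.erase s).card) ?_ ⟨V.erase s, rfl, ?_⟩
    · rw [← hVc]
      exact Finset.card_erase_lt_of_mem hs
    · rw [hV]
      apply Set.Subset.antisymm
      · refine convexHull_min ?_ (convex_convexHull ℝ _)
        intro t ht
        by_cases hts : t = s
        · rw [hts]
          exact hsc
        · exact subset_convexHull ℝ _ (by simpa [hts] using ht)
      · exact convexHull_mono (by exact_mod_cast Finset.erase_subset s V)
  refine ⟨V, hV, fun v => ⟨?_, fun hv => ?_⟩⟩
  · rintro (h | h | ⟨f, c, hfc, h⟩)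
    · exact absurd h (Set.singleton_ne_empty v)
    · have hne : (V : Set (Fin n → ℝ)).Nonempty := by
        rw [← convexHull_nonempty_iff (𝕜 := ℝ), ← hV, ← h]
        exact Set.singleton_nonempty v
      obtain ⟨s, hs⟩ := hne
      have : s ∈ ({v} : Set (Fin n → ℝ)) := by
        rw [h, hV]
        exact subset_convexHull ℝ _ hs
      rw [Set.mem_singleton_iff] at this
      exact this ▸ hs
    · have hface : {x ∈ P | f x = c} = convexHull ℝ
          ((V.filter (fun s => f s = c) : Finset (Fin n → ℝ)) : Set (Fin n → ℝ)) := by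
        rw [hV]
        refine face_eq (A := V.filter (fun s => f s = c)) (Finset.filter_subset _ _) ?_
        intro s hs
        refine ⟨hfc s (hV ▸ subset_convexHull ℝ _ hs), by simp [hs]⟩
      have hne : ((V.filter (fun s => f s = c) : Finset _) : Set (Fin n → ℝ)).Nonempty := by
        rw [← convexHull_nonempty_iff (𝕜 := ℝ), ← hface, ← h]
        exact Set.singleton_nonempty v
      obtain ⟨s, hs⟩ := hne
      have : s ∈ ({v} : Set (Fin n → ℝ)) := by
        rw [h, hface]
        exact subset_convexHull ℝ _ hs
      rw [Set.mem_singleton_iff] at this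
      rw [← this]
      exact (Finset.mem_filter.1 hs).1
  · obtain ⟨f, u, hfu, hfv⟩ := geometric_hahn_banach_closed_point (convex_convexHull ℝ _)
      ((V.erase v).finite_toSet.isCompact_convexHull (𝕜 := ℝ)).isClosed (hmin v hv)
    have hlt : ∀ s ∈ V, s ≠ v → f s < f v := fun s hs hsv =>
      (hfu s (subset_convexHull ℝ _ (by simp [hs, hsv]))).trans hfv
    have hle : ∀ s ∈ V, f s ≤ f v := by
      intro s hs
      by_cases hsv : s = v
      · rw [hsv]
      · exact (hlt s hs hsv).le
    refine Or.inr (Or.inr ⟨f.toLinearMap, f v, ?_, ?_⟩)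
    · intro x hx
      rw [hV] at hx
      exact le_of_mem_convexHull (f := f.toLinearMap) hle hx
    · rw [hV, face_eq (A := {v}) (by simpa using hv), Finset.coe_singleton, convexHull_singleton]
      intro s hs
      refine ⟨hle s hs, ?_⟩
      rw [Finset.mem_singleton]
      refine ⟨fun h => ?_, fun h => by rw [h]; rfl⟩
      by_contra hsv
      exact (hlt s hs hsv).ne h

/-! ### Facets as sets of vertices -/

/-- `A` is the vertex set of a facet of `conv V`: it is nonempty, consists of the points of `V` on
a supporting hyperplane, and its dimension is one less than that of `V`. -/
def IsFacetSet {n : ℕ} (V A : Finset (Fin n → ℝ)) : Prop :=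
  A ⊆ V ∧ A.Nonempty ∧
    Module.finrank ℝ (vectorSpan ℝ (A : Set (Fin n → ℝ))) + 1 =
      Module.finrank ℝ (vectorSpan ℝ (V : Set (Fin n → ℝ))) ∧
    ∃ (f : (Fin n → ℝ) →ₗ[ℝ] ℝ) (c : ℝ), ∀ v ∈ V, f v ≤ c ∧ (f v = c ↔ v ∈ A)

lemma IsFacetSet.isFacet {n : ℕ} {V A : Finset (Fin n → ℝ)} (h : IsFacetSet V A) :
    IsFacet (convexHull ℝ (V : Set (Fin n → ℝ))) (convexHull ℝ (A : Set (Fin n → ℝ))) := by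
  obtain ⟨hAV, hne, hdim, f, c, hfc⟩ := h
  refine ⟨Or.inr (Or.inr ⟨f, c, ?_, (face_eq hAV hfc).symm⟩), ?_, ?_⟩
  · exact fun x hx => le_of_mem_convexHull (fun v hv => (hfc v hv).1) hx
  · exact convexHull_nonempty_iff.2 hne
  · rw [sdim_convexHull, sdim_convexHull, hdim]

lemma IsFacetSet.mem_convexHull_iff {n : ℕ} {V A : Finset (Fin n → ℝ)} (h : IsFacetSet V A)
    {v : Fin n → ℝ} (hv : v ∈ V) : v ∈ convexHull ℝ (A : Set (Fin n → ℝ)) ↔ v ∈ A := by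
  obtain ⟨hAV, hne, hdim, f, c, hfc⟩ := h
  rw [← face_eq hAV hfc, ← (hfc v hv).2]
  exact ⟨fun h => h.2, fun h => ⟨subset_convexHull ℝ _ hv, h⟩⟩

/-- Every facet is the convex hull of a facet vertex set. -/
lemma exists_isFacetSet {n : ℕ} {V : Finset (Fin n → ℝ)} {F : Set (Fin n → ℝ)}
    (h : IsFacet (convexHull ℝ (V : Set (Fin n → ℝ))) F) :
    ∃ A, IsFacetSet V A ∧ F = convexHull ℝ (A : Set (Fin n → ℝ)) := by
  classical
  obtain ⟨hF, hne, hdim⟩ := h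
  rcases hF with rfl | rfl | ⟨f, c, hfc, rfl⟩
  · exact absurd hne Set.not_nonempty_empty
  · omega
  · have hA : ∀ v ∈ V, f v ≤ c ∧ (f v = c ↔ v ∈ V.filter (fun s => f s = c)) := fun v hv =>
      ⟨hfc v (subset_convexHull ℝ _ hv), by simp [hv]⟩
    have heq := face_eq (Finset.filter_subset _ _) hA
    rw [heq] at hne hdim ⊢
    rw [sdim_convexHull, sdim_convexHull] at hdim
    exact ⟨_, ⟨Finset.filter_subset _ _, convexHull_nonempty_iff.1 hne, hdim, f, c, hA⟩, rfl⟩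

/-! ### Facets through a ridge -/

/-- At most two facets `R ∪ {x}`, `R ∪ {y}` contain `R`. With `fG`, `fH` the functionals of the
facets `R ∪ {y}` and `R ∪ {z}`, the affine function `fH(x) fG - fG(x) fH` vanishes on `R ∪ {x}`, hence is a multiple of the functional of that facet; its signs
at `y` and `z` are opposite, so it vanishes. -/
lemma unique_other {n : ℕ} {V R : Finset (Fin n → ℝ)} [DecidableEq (Fin n → ℝ)]
    {x y z : Fin n → ℝ} (hxR : x ∉ R) (hyR : y ∉ R) (hzR : z ∉ R) (hyx : y ≠ x) (hzx : z ≠ x)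
    (hx : IsFacetSet V (insert x R)) (hy : IsFacetSet V (insert y R))
    (hz : IsFacetSet V (insert z R)) : y = z := by
  obtain ⟨hxV, -, hdim, f, c, hf⟩ := hx
  obtain ⟨hyV, -, -, f₁, c₁, hf₁⟩ := hy
  obtain ⟨hzV, -, -, f₂, c₂, hf₂⟩ := hz
  have hxm : x ∈ V := hxV (Finset.mem_insert_self _ _)
  have hym : y ∈ V := hyV (Finset.mem_insert_self _ _)
  have hzm : z ∈ V := hzV (Finset.mem_insert_self _ _)
  have hxf : f x = c := (hf x hxm).2.2 (by simp)
  have hRf : ∀ r ∈ R, f r = c := fun r hr =>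
    (hf r (hxV (Finset.mem_insert_of_mem hr))).2.2 (by simp [hr])
  have hRf₁ : ∀ r ∈ R, f₁ r = c₁ := fun r hr =>
    (hf₁ r (hxV (Finset.mem_insert_of_mem hr))).2.2 (by simp [hr])
  have hRf₂ : ∀ r ∈ R, f₂ r = c₂ := fun r hr =>
    (hf₂ r (hxV (Finset.mem_insert_of_mem hr))).2.2 (by simp [hr])
  have pos : ∀ {f : (Fin n → ℝ) →ₗ[ℝ] ℝ} {c : ℝ} {w v : Fin n → ℝ},
      (∀ v ∈ V, f v ≤ c ∧ (f v = c ↔ v ∈ insert w R)) → v ∈ V → v ≠ w → v ∉ R → 0 < c - f v := by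
    intro f c w v h hv hvw hvR
    refine sub_pos.2 (lt_of_le_of_ne (h v hv).1 fun he => ?_)
    rcases Finset.mem_insert.1 ((h v hv).2.1 he) with h | h
    · exact hvw h
    · exact hvR h
  have hfy : 0 < c - f y := pos hf hym hyx hyR
  have hfz : 0 < c - f z := pos hf hzm hzx hzR
  have h₁x : 0 < c₁ - f₁ x := pos hf₁ hxm hyx.symm hxR
  have h₂x : 0 < c₂ - f₂ x := pos hf₂ hxm hzx.symm hxR
  have h₁y : f₁ y = c₁ := (hf₁ y hym).2.2 (by simp)
  have h₂z : f₂ z = c₂ := (hf₂ z hzm).2.2 (by simp)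
  have h₂y : 0 ≤ c₂ - f₂ y := sub_nonneg.2 (hf₂ y hym).1
  have h₁z : 0 ≤ c₁ - f₁ z := sub_nonneg.2 (hf₁ z hzm).1
  -- `R ∪ {x, y}` spans everything
  have hspan : vectorSpan ℝ ((insert y (insert x R) : Finset (Fin n → ℝ)) : Set (Fin n → ℝ)) =
      vectorSpan ℝ (V : Set (Fin n → ℝ)) := by
    apply Submodule.eq_of_le_of_finrank_le
    · exact vectorSpan_mono ℝ (by exact_mod_cast Finset.insert_subset hym hxV)
    · have := finrank_vectorSpan_lt (A := ((insert x R : Finset (Fin n → ℝ)) : Set (Fin n → ℝ)))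
        (B := ((insert y (insert x R) : Finset (Fin n → ℝ)) : Set (Fin n → ℝ)))
        (by exact_mod_cast Finset.subset_insert _ _) (f := f) (c := c)
        (fun a ha => (hf a (hxV ha)).2.2 ha) (p := x) (q := y) (by simp) (by simp)
        (by rw [hxf]; linarith)
      omega
  -- `k` is the linear part of the combination, corrected by the multiple of `f` that makes it
  -- vanish at `y` as well
  set A := c₁ - f₁ x with hA
  set B := c₂ - f₂ x with hB
  set t := -(A * (c₂ - f₂ y)) / (c - f y) with ht
  have hty : t * (c - f y) = -(A * (c₂ - f₂ y)) := div_mul_cancel₀ _ hfy.ne'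
  let k : (Fin n → ℝ) →ₗ[ℝ] ℝ := B • f₁ - A • f₂ - t • f
  have hk : ∀ v, k v = B * f₁ v - A * f₂ v - t * f v := fun v => by simp [k]
  have hkc : ∀ v ∈ ((insert y (insert x R) : Finset (Fin n → ℝ)) : Set (Fin n → ℝ)),
      k v = B * c₁ - A * c₂ - t * c := by
    intro v hv
    rw [hk]
    rcases Finset.mem_insert.1 (Finset.mem_coe.1 hv) with rfl | hv
    · rw [h₁y]
      linarith
    rcases Finset.mem_insert.1 hv with rfl | hv
    · rw [hxf, show f₁ v = c₁ - A by rw [hA]; ring, show f₂ v = c₂ - B by rw [hB]; ring]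
      ring
    · rw [hRf v hv, hRf₁ v hv, hRf₂ v hv]
  have hker := vectorSpan_le_ker hkc
  rw [hspan] at hker
  have hkz : k z = k x := by
    have := hker (vsub_mem_vectorSpan ℝ (Finset.mem_coe.2 hzm) (Finset.mem_coe.2 hxm))
    rw [LinearMap.mem_ker, vsub_eq_sub, map_sub] at this
    linarith
  rw [hkc x (by simp), hk, h₂z] at hkz
  have hzeq : B * (c₁ - f₁ z) = t * (c - f z) := by linarith
  have ht0 : t ≤ 0 := by
    rw [ht]
    exact div_nonpos_of_nonpos_of_nonneg (neg_nonpos.2 (mul_nonneg h₁x.le h₂y)) hfy.le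
  have hle : B * (c₁ - f₁ z) ≤ 0 := by
    rw [hzeq]
    exact mul_nonpos_of_nonpos_of_nonneg ht0 hfz.le
  have hz0 : f₁ z = c₁ := by
    by_contra hne
    have : 0 < c₁ - f₁ z := lt_of_le_of_ne h₁z fun h => hne (by linarith)
    have := mul_pos h₂x this
    linarith
  rcases Finset.mem_insert.1 ((hf₁ z hzm).2.1 hz0) with h | h
  · exact h.symm
  · exact absurd h hzR

/-- If `R ∪ {x}` is a facet of a simplicial polytope, then some other facet contains `R`: rotate the
supporting hyperplane of `R ∪ {x}` about `R` until it meets another vertex `y`. -/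
lemma exists_other {n d : ℕ} [DecidableEq (Fin n → ℝ)] {V R : Finset (Fin n → ℝ)} (hd : 1 < d)
    (hdV : Module.finrank ℝ (vectorSpan ℝ (V : Set (Fin n → ℝ))) = d)
    (hcard : ∀ A, IsFacetSet V A → A.card = d) (hR : R.card + 1 = d) {x : Fin n → ℝ}
    (hxR : x ∉ R) (hx : IsFacetSet V (insert x R)) :
    ∃ y ∈ V, y ∉ R ∧ y ≠ x ∧ IsFacetSet V (insert y R) := by
  obtain ⟨hxV, -, hdim, f, c, hf⟩ := hx
  have hRV : R ⊆ V := (Finset.subset_insert _ _).trans hxV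
  have hxm : x ∈ V := hxV (Finset.mem_insert_self _ _)
  have hRf : ∀ r ∈ R, f r = c := fun r hr => (hf r (hRV hr)).2.2 (by simp [hr])
  obtain ⟨r₀, hr₀⟩ : R.Nonempty := Finset.card_pos.1 (by omega)
  have hRdim : Module.finrank ℝ (vectorSpan ℝ (R : Set (Fin n → ℝ))) ≤ d - 2 := by
    have := finrank_vectorSpan_image_finset_le ℝ (id : (Fin n → ℝ) → _) R (n := d - 2) (by omega)
    rwa [Finset.image_id] at this
  have hRdim' : d - 2 ≤ Module.finrank ℝ (vectorSpan ℝ (R : Set (Fin n → ℝ))) := by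
    have := finrank_vectorSpan_insert_le_set ℝ (R : Set (Fin n → ℝ)) x
    rw [Finset.coe_insert] at hdim
    omega
  have hxspan : x -ᵥ r₀ ∉ vectorSpan ℝ (R : Set (Fin n → ℝ)) := by
    intro h
    rw [← direction_affineSpan, AffineSubspace.vsub_right_mem_direction_iff_mem
      (mem_affineSpan ℝ (Finset.mem_coe.2 hr₀))] at h
    rw [Finset.coe_insert, vectorSpan_insert_eq_vectorSpan h] at hdim
    omega
  obtain ⟨g, hgx, hgR⟩ : ∃ g : (Fin n → ℝ) →ₗ[ℝ] ℝ, 0 < g x - g r₀ ∧ ∀ r ∈ R, g r = g r₀ := by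
    obtain ⟨g, hg, hker⟩ := Submodule.exists_le_ker_of_notMem hxspan
    rw [vsub_eq_sub, map_sub] at hg
    have hgR : ∀ r ∈ R, g r = g r₀ := by
      intro r hr
      have := hker (vsub_mem_vectorSpan ℝ (Finset.mem_coe.2 hr) (Finset.mem_coe.2 hr₀))
      rw [LinearMap.mem_ker, vsub_eq_sub, map_sub] at this
      linarith
    rcases lt_or_gt_of_ne hg with h | h
    · refine ⟨-g, ?_, fun r hr => ?_⟩
      · simp only [LinearMap.neg_apply]
        linarith
      · simp [hgR r hr]
    · exact ⟨g, h, hgR⟩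
  have hpos : ∀ v ∈ V \ insert x R, 0 < c - f v := by
    intro v hv
    obtain ⟨hv, hvR⟩ := Finset.mem_sdiff.1 hv
    exact sub_pos.2 (lt_of_le_of_ne (hf v hv).1 fun he => hvR ((hf v hv).2.1 he))
  have hne : (V \ insert x R).Nonempty := by
    rw [Finset.nonempty_iff_ne_empty, ne_eq, Finset.sdiff_eq_empty_iff_subset]
    intro h
    rw [Finset.Subset.antisymm hxV h] at hdim
    omega
  obtain ⟨y, hy, hmax⟩ :=
    Finset.exists_max_image (V \ insert x R) (fun v => -(g v - g r₀) / (c - f v)) hne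
  obtain ⟨hyV, hyxR⟩ := Finset.mem_sdiff.1 hy
  rw [Finset.mem_insert, not_or] at hyxR
  set a := -(g y - g r₀) / (c - f y) with ha
  have hay : a * (c - f y) = -(g y - g r₀) := div_mul_cancel₀ _ (hpos y hy).ne'
  let h : (Fin n → ℝ) →ₗ[ℝ] ℝ := a • f - g
  set e := a * c - g r₀ with he
  have hh : ∀ v, h v = a * f v - g v := fun v => by simp [h]
  have hhR : ∀ r ∈ R, h r = e := fun r hr => by rw [hh, hRf r hr, hgR r hr]
  have hhx : h x < e := by
    rw [hh, (hf x hxm).2.2 (by simp)]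
    linarith
  have hhy : h y = e := by
    rw [hh]
    linarith
  have hle : ∀ v ∈ V, h v ≤ e := by
    intro v hv
    by_cases hvx : v ∈ insert x R
    · rcases Finset.mem_insert.1 hvx with rfl | hvR
      · exact hhx.le
      · exact (hhR v hvR).le
    · have hvs := Finset.mem_sdiff.2 ⟨hv, hvx⟩
      have := hmax v hvs
      rw [div_le_iff₀ (hpos v hvs)] at this
      rw [hh]
      linarith
  set G := V.filter (fun v => h v = e) with hG
  have hRG : insert y R ⊆ G := by
    intro v hv
    rcases Finset.mem_insert.1 hv with rfl | hv
    · exact Finset.mem_filter.2 ⟨hyV, hhy⟩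
    · exact Finset.mem_filter.2 ⟨hRV hv, hhR v hv⟩
  have hdim₁ := finrank_vectorSpan_lt (A := (G : Set (Fin n → ℝ))) (B := (V : Set (Fin n → ℝ)))
    (by exact_mod_cast Finset.filter_subset _ _) (f := h) (c := e)
    (fun v hv => (Finset.mem_filter.1 (Finset.mem_coe.1 hv)).2) (p := x) (q := y) hxm hyV
    (by rw [hhy]; exact hhx.ne)
  have hdim₂ := finrank_vectorSpan_lt (A := (R : Set (Fin n → ℝ))) (B := (G : Set (Fin n → ℝ)))
    (by exact_mod_cast (Finset.subset_insert _ _).trans hRG) (f := f) (c := c) hRf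
    (p := r₀) (q := y) (hRG (Finset.mem_insert_of_mem hr₀)) (hRG (Finset.mem_insert_self _ _))
    (by rw [hRf r₀ hr₀]; linarith [hpos y hy])
  have hGF : IsFacetSet V G := by
    refine ⟨Finset.filter_subset _ _, ⟨y, hRG (Finset.mem_insert_self _ _)⟩, by omega, h, e, ?_⟩
    intro v hv
    exact ⟨hle v hv, by simp [hG, hv]⟩
  have heq : insert y R = G := by
    apply Finset.eq_of_subset_of_card_le hRG
    rw [hcard G hGF, Finset.card_insert_of_notMem hyxR.2, hR]
  exact ⟨y, hyV, hyxR.2, hyxR.1, heq ▸ hGF⟩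

/-- The ridge property: each `(d-1)`-set of vertices lies in either `0` or `2` facets. -/
lemma even_ridge {n d : ℕ} [DecidableEq (Fin n → ℝ)] {V R : Finset (Fin n → ℝ)} (hd : 1 < d)
    (hdV : Module.finrank ℝ (vectorSpan ℝ (V : Set (Fin n → ℝ))) = d)
    (hcard : ∀ A, IsFacetSet V A → A.card = d) (hR : R.card + 1 = d)
    [DecidablePred fun x => IsFacetSet V (insert x R)] :
    Even ((V \ R).filter (fun x => IsFacetSet V (insert x R))).card := by
  rcases Finset.eq_empty_or_nonempty ((V \ R).filter (fun x => IsFacetSet V (insert x R)))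
    with h | ⟨x, hx⟩
  · simp [h]
  · obtain ⟨hxVR, hxF⟩ := Finset.mem_filter.1 hx
    have hxR := (Finset.mem_sdiff.1 hxVR).2
    obtain ⟨y, hyV, hyR, hyx, hyF⟩ := exists_other hd hdV hcard hR hxR hxF
    have : (V \ R).filter (fun x => IsFacetSet V (insert x R)) = {x, y} := by
      ext z
      simp only [Finset.mem_filter, Finset.mem_sdiff, Finset.mem_insert, Finset.mem_singleton]
      constructor
      · rintro ⟨⟨hzV, hzR⟩, hzF⟩
        by_cases hzx : z = x
        · exact Or.inl hzx
        · exact Or.inr (unique_other hxR hzR hyR hzx hyx hxF hzF hyF)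
      · rintro (rfl | rfl)
        · exact ⟨Finset.mem_sdiff.1 hxVR, hxF⟩
        · exact ⟨⟨hyV, hyR⟩, hyF⟩
    rw [this, Finset.card_pair hyx.symm]
    exact even_two

/-! ### Disjoint facets -/

theorem stmt4 {n d : ℕ} (hd : 1 < d) (P : Set (Fin n → ℝ))
    (hP : IsPolytope P) (hdim : sdim P = d)
    (hsimplicial : IsSimplicialPolytope P)
    (hverts : {v | IsVertex P v}.ncard = 2 * d) :
    Even {p : Set (Set (Fin n → ℝ)) | ∃ F G : Set (Fin n → ℝ), F ≠ G ∧
        IsFacet P F ∧ IsFacet P G ∧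
        (∀ v, IsVertex P v → ¬ (v ∈ F ∧ v ∈ G)) ∧ p = {F, G}}.ncard ∧
    ∀ F G H : Set (Fin n → ℝ), IsFacet P F → IsFacet P G → IsFacet P H →
      F ≠ G → F ≠ H →
      (∀ v, IsVertex P v → ¬ (v ∈ F ∧ v ∈ G)) →
      (∀ v, IsVertex P v → ¬ (v ∈ F ∧ v ∈ H)) →
      G = H := by
  classical
  obtain ⟨V, rfl, hvert⟩ := exists_vertices hP
  have hdV : Module.finrank ℝ (vectorSpan ℝ (V : Set (Fin n → ℝ))) = d := by
    rw [← sdim_convexHull, hdim]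
  have hVcard : V.card = 2 * d := by
    rw [← hverts, ← Set.ncard_coe_finset]
    congr 1
    ext v
    exact (hvert v).symm
  have hcard : ∀ A, IsFacetSet V A → A.card = d := by
    intro A hA
    rw [← hdim, ← hsimplicial _ hA.isFacet, ← Set.ncard_coe_finset]
    congr 1
    ext v
    rw [Set.mem_ofPred_eq, hvert, Finset.mem_coe]
    exact ⟨fun h => ⟨hA.1 h, (hA.mem_convexHull_iff (hA.1 h)).2 h⟩,
      fun h => (hA.mem_convexHull_iff h.1).1 h.2⟩
  have hcompl : ∀ A B, IsFacetSet V A → IsFacetSet V B →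
      (∀ v, IsVertex (convexHull ℝ (V : Set (Fin n → ℝ))) v →
        ¬ (v ∈ convexHull ℝ (A : Set (Fin n → ℝ)) ∧ v ∈ convexHull ℝ (B : Set (Fin n → ℝ)))) →
      B = V \ A := by
    intro A B hA hB hdisj
    apply Finset.eq_of_subset_of_card_le
    · intro v hv
      refine Finset.mem_sdiff.2 ⟨hB.1 hv, fun hvA => hdisj v ((hvert v).2 (hB.1 hv)) ⟨?_, ?_⟩⟩
      · exact subset_convexHull ℝ _ hvA
      · exact subset_convexHull ℝ _ hv
    · rw [Finset.card_sdiff_of_subset hA.1, hcard A hA, hcard B hB]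
      omega
  have hinj : ∀ A B, IsFacetSet V A → IsFacetSet V B →
      convexHull ℝ (A : Set (Fin n → ℝ)) = convexHull ℝ (B : Set (Fin n → ℝ)) → A = B := by
    intro A B hA hB h
    ext v
    constructor
    · intro hv
      rw [← hB.mem_convexHull_iff (hA.1 hv), ← h]
      exact subset_convexHull ℝ _ hv
    · intro hv
      rw [← hA.mem_convexHull_iff (hB.1 hv), h]
      exact subset_convexHull ℝ _ hv
  refine ⟨?_, ?_⟩
  · obtain ⟨v₀, hv₀⟩ : V.Nonempty := Finset.card_pos.1 (by omega)
    set Z := V.powerset.filter (IsFacetSet V) with hZdef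
    have hmemZ : ∀ A, A ∈ Z ↔ IsFacetSet V A := fun A => by
      rw [hZdef, Finset.mem_filter, Finset.mem_powerset]
      exact ⟨fun h => h.2, fun h => ⟨h.1, h⟩⟩
    have heven := even_complementary V d hd hVcard Z
      (fun A hA => ⟨((hmemZ A).1 hA).1, hcard A ((hmemZ A).1 hA)⟩)
      (fun R _ hR => by
        simp only [hmemZ]
        exact even_ridge hd hdV hcard hR) v₀ hv₀
    rw [← Set.ncard_coe_finset] at heven
    let φ : Finset (Fin n → ℝ) → Set (Set (Fin n → ℝ)) := fun A =>
      {convexHull ℝ (A : Set (Fin n → ℝ)), convexHull ℝ ((V \ A : Finset _) : Set (Fin n → ℝ))}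
    convert heven using 1
    refine Eq.trans ?_ (Set.InjOn.ncard_image (f := φ) ?_)
    · congr 1
      ext p
      simp only [Set.mem_ofPred_eq, Set.mem_image, Finset.mem_coe, Finset.mem_filter, hmemZ]
      constructor
      · rintro ⟨F, G, -, hF, hG, hdisj, rfl⟩
        obtain ⟨A, hA, rfl⟩ := exists_isFacetSet hF
        obtain ⟨B, hB, rfl⟩ := exists_isFacetSet hG
        have hBA := hcompl A B hA hB hdisj
        by_cases hvA : v₀ ∈ A
        · have hAB := hcompl B A hB hA (fun v hv h => hdisj v hv h.symm)
          refine ⟨B, ⟨hB, ?_, hAB ▸ hA⟩, ?_⟩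
          · rw [hBA]
            simp [hvA]
          · simp only [φ]
            rw [← hAB, Set.pair_comm]
        · refine ⟨A, ⟨hA, hvA, hBA ▸ hB⟩, ?_⟩
          simp only [φ]
          rw [← hBA]
      · rintro ⟨A, ⟨hA, hvA, hB⟩, rfl⟩
        refine ⟨_, _, ?_, hA.isFacet, hB.isFacet, ?_, rfl⟩
        · intro h
          obtain ⟨a, ha⟩ := hA.2.1
          have : a ∈ V \ A := hinj _ _ hA hB h ▸ ha
          exact (Finset.mem_sdiff.1 this).2 ha
        · rintro v hv ⟨h1, h2⟩
          rw [hvert] at hv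
          rw [hA.mem_convexHull_iff hv] at h1
          rw [hB.mem_convexHull_iff hv] at h2
          exact (Finset.mem_sdiff.1 h2).2 h1
    · intro A hA B hB hAB
      simp only [Finset.mem_coe, Finset.mem_filter, hmemZ] at hA hB
      have hm : convexHull ℝ (A : Set (Fin n → ℝ)) ∈ φ B := hAB ▸ Set.mem_insert _ _
      rcases hm with h | h
      · exact hinj _ _ hA.1 hB.1 h
      · -- this case would put `v₀`, which lies in `V \ B`, into `A`
        have := hinj _ _ hA.1 hB.2.2 h
        exact absurd (this ▸ Finset.mem_sdiff.2 ⟨hv₀, hB.2.1⟩) hA.2.1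
  · intro F G H hF hG hH _ _ hFG hFH
    obtain ⟨A, hA, rfl⟩ := exists_isFacetSet hF
    obtain ⟨B, hB, rfl⟩ := exists_isFacetSet hG
    obtain ⟨C, hC, rfl⟩ := exists_isFacetSet hH
    rw [hcompl A B hA hB hFG, hcompl A C hA hC hFH]
end
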